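/- arXiv:1712.02454 — 6 statements merged into one kernel-verified Lean document; each statement's English description precedes it below -/
import Mathlib

section
/- The monoid H(2) of hives for GL(2) is freely generated as a commutative monoid by the five hives (written as tuples (h_{11}, h_{21}, h_{22}, h_{31}, h_{32}, h_{33})): h_1 = (0,0,1,0,1,2), h_2 = (0,1,1,1,2,2), h_3 = (0,1,1,1,1,1), h_4 = (0,1,1,2,2,2), h_5 = (0,0,1,0,1,1). That is, the monoid homomorphism N^5 → H(2) sending (m_1,...,m_5) to m_1 h_1 + ... + m_5 h_5 is a bijection. -/
/-- A hive for `GL(2)`, written as a tuple `(h₁₁, h₂₁, h₂₂, h₃₁, h₃₂, h₃₃)`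
(indices `0,...,5`): `h₁₁ = 0`, the rhombus conditions hold, and the three
boundary sequences are non-negative dominant. -/
def IsHive2 (h : Fin 6 → ℤ) : Prop :=
  h 0 = 0 ∧
  -- rhombus conditions
  h 3 + h 2 ≤ h 1 + h 4 ∧
  h 4 + h 0 ≤ h 1 + h 2 ∧
  h 5 + h 1 ≤ h 4 + h 2 ∧
  -- boundary sequence a: (h₂₂ - h₁₁, h₃₃ - h₂₂)
  h 5 - h 2 ≤ h 2 - h 0 ∧ 0 ≤ h 5 - h 2 ∧
  -- boundary sequence b: (h₂₁ - h₁₁, h₃₁ - h₂₁)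
  h 3 - h 1 ≤ h 1 - h 0 ∧ 0 ≤ h 3 - h 1 ∧
  -- boundary sequence c: (h₃₂ - h₃₁, h₃₃ - h₃₂)
  h 5 - h 4 ≤ h 4 - h 3 ∧ 0 ≤ h 5 - h 4

/-- The five generating hives of the hive monoid `H(2)`. -/
def hive2Gens : Fin 5 → Fin 6 → ℤ :=
  ![![0,0,1,0,1,2], ![0,1,1,1,2,2], ![0,1,1,1,1,1], ![0,1,1,2,2,2], ![0,0,1,0,1,1]]

/-- The monoid `H(2)` of hives for `GL(2)` is freely generated as a commutative monoid
by the five hives `h₁, ..., h₅`: every `ℕ`-linear combination of them is a hive, and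
every hive is such a combination in a unique way. -/
theorem hive2_free_generation :
    (∀ m : Fin 5 → ℕ, IsHive2 (fun j => ∑ k : Fin 5, (m k : ℤ) * hive2Gens k j)) ∧
    (∀ h : Fin 6 → ℤ, IsHive2 h →
      ∃! m : Fin 5 → ℕ, h = fun j => ∑ k : Fin 5, (m k : ℤ) * hive2Gens k j) := by
  constructor
  · intro m
    simp [IsHive2, hive2Gens, Fin.sum_univ_succ]
    omega
  · intro h hh
    obtain ⟨h0, r1, r2, r3, a1, a2, b1, b2, c1, c2⟩ := hh
    refine ⟨![(h 5 - h 4).toNat, (h 4 - h 2 - h 3 + h 1).toNat, (h 1 + h 2 - h 4).toNat,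
      (h 3 - h 1).toNat, (h 2 - h 1 - h 5 + h 4).toNat], ?_, ?_⟩
    · funext j
      fin_cases j <;> simp [hive2Gens, Fin.sum_univ_succ] <;> omega
    · intro m hm
      have e1 := congrFun hm 1
      have e2 := congrFun hm 2
      have e3 := congrFun hm 3
      have e4 := congrFun hm 4
      have e5 := congrFun hm 5
      clear hm
      simp [hive2Gens, Fin.sum_univ_succ] at e1 e2 e3 e4 e5
      funext k
      fin_cases k <;> simp <;> omega
end

section
/- For each natural number d, let m_d denote the number of hives h for GL(2) with h_{33} = d. Then the generating function identity (Σ_{d ≥ 0} m_d t^d) · (1−t)^2 (1−t^2)^3 = 1 holds in the ring of formal power series Z[[t]]. In particular m_0 = 1, m_1 = 2, m_2 = 6, m_3 = 10, m_4 = 20, m_5 = 30, m_6 = 50, m_7 = 70, m_8 = 105, m_9 = 140. -/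
/-- `hiveCount2 d` is the number of hives for `GL(2)` with top entry `h₃₃ = d`. -/
noncomputable def hiveCount2 (d : ℕ) : ℕ :=
  Set.ncard {h : Fin 6 → ℤ | IsHive2 h ∧ h 5 = (d : ℤ)}

open PowerSeries in
lemma hive_aux_one : (PowerSeries.mk fun _ => (1 : ℤ)) * (1 - X) = 1 := by
  ext n
  rw [mul_sub, mul_one, map_sub]
  rcases n with _ | n
  · simp
  · simp [coeff_succ_mul_X, coeff_one]

open PowerSeries in
lemma hive_aux_two :
    (PowerSeries.mk fun n => if 2 ∣ n then (1 : ℤ) else 0) * (1 - X ^ 2) = 1 := by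
  ext n
  rw [mul_sub, mul_one, map_sub, coeff_mul_X_pow']
  rcases n with _ | _ | n
  · simp
  · simp [coeff_one]
  · simp [coeff_one]

/-- The five power series whose product is the generating function. -/
noncomputable def hiveFactor (i : Fin 5) : PowerSeries ℤ :=
  if i < 2 then PowerSeries.mk fun _ => (1 : ℤ)
  else PowerSeries.mk fun n => if 2 ∣ n then (1 : ℤ) else 0

/-- The hive with given cone coordinates. -/
def hiveOf (l : Fin 5 →₀ ℕ) : Fin 6 → ℤ :=
  let d : ℤ := l 0 + l 1 + l 2 + l 3 + l 4
  let x : ℤ := (l 2 / 2 : ℕ)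
  let b : ℤ := (l 3 / 2 : ℕ)
  let c : ℤ := (l 4 / 2 : ℕ)
  ![0, l 0 + x + b, d - (x + b + c), l 0 + x + b + b, d - c, d]

/-- Admissible exponent vectors. -/
def hiveExps (d : ℕ) : Finset (Fin 5 →₀ ℕ) :=
  (Finset.finsuppAntidiag Finset.univ d).filter fun l => 2 ∣ l 2 ∧ 2 ∣ l 3 ∧ 2 ∣ l 4

lemma mem_hiveExps (d : ℕ) (l : Fin 5 →₀ ℕ) : l ∈ hiveExps d ↔
    l 0 + l 1 + l 2 + l 3 + l 4 = d ∧ 2 ∣ l 2 ∧ 2 ∣ l 3 ∧ 2 ∣ l 4 := by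
  simp [hiveExps, Finset.mem_finsuppAntidiag, Fin.sum_univ_five]

lemma hive_injOn (d : ℕ) : Set.InjOn hiveOf (hiveExps d : Set (Fin 5 →₀ ℕ)) := by
  intro l hl m hm h
  rw [Finset.mem_coe, mem_hiveExps] at hl hm
  have h1 := congrFun h 1
  have h2 := congrFun h 2
  have h3 := congrFun h 3
  have h4 := congrFun h 4
  have h5 := congrFun h 5
  simp [hiveOf] at h1 h2 h3 h4 h5
  ext i
  fin_cases i <;> simp <;> omega

lemma hive_image (d : ℕ) : {h : Fin 6 → ℤ | IsHive2 h ∧ h 5 = (d : ℤ)} =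
    Set.image hiveOf (hiveExps d : Set (Fin 5 →₀ ℕ)) := by
  ext h
  simp only [Set.mem_ofPred_eq, Set.mem_image, Finset.mem_coe, mem_hiveExps]
  constructor
  · rintro ⟨⟨h0, h1, h2, h3, h4, h5, h6, h7, h8, h9⟩, hd⟩
    refine ⟨Finsupp.equivFunOnFinite.symm ![(h 1 + h 2 - h 4).toNat,
      (h 4 + h 2 - h 5 - h 1).toNat, 2 * (h 1 + h 4 - h 3 - h 2).toNat,
      2 * (h 3 - h 1).toNat, 2 * (h 5 - h 4).toNat], ?_, ?_⟩
    · simp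
      omega
    · ext i
      fin_cases i <;> simp [hiveOf] <;> omega
  · rintro ⟨l, hl, rfl⟩
    simp [IsHive2, hiveOf]
    omega

lemma hiveCount2_eq (d : ℕ) : hiveCount2 d = (hiveExps d).card := by
  rw [hiveCount2, hive_image, Set.InjOn.ncard_image (hive_injOn d), Set.ncard_coe_finset]

lemma hive_series : (PowerSeries.mk fun d => (hiveCount2 d : ℤ)) = ∏ i, hiveFactor i := by
  ext d
  rw [PowerSeries.coeff_prod, PowerSeries.coeff_mk, hiveCount2_eq, hiveExps,
    Finset.card_filter]
  push_cast
  refine Finset.sum_congr rfl fun l _ => ?_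
  simp only [Fin.prod_univ_five, hiveFactor]
  by_cases h2 : 2 ∣ l 2 <;> by_cases h3 : 2 ∣ l 3 <;> by_cases h4 : 2 ∣ l 4 <;>
    simp [h2, h3, h4]

lemma hive_gf : (PowerSeries.mk fun d => (hiveCount2 d : ℤ)) *
      ((1 - PowerSeries.X) ^ 2 * (1 - PowerSeries.X ^ 2) ^ 3) = 1 := by
  have h1 := hive_aux_one
  have h2 := hive_aux_two
  rw [hive_series, Fin.prod_univ_five]
  simp only [hiveFactor]
  simp only [show (0 : Fin 5) < 2 by decide, show (1 : Fin 5) < 2 by decide,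
    show ¬ (2 : Fin 5) < 2 by decide, show ¬ (3 : Fin 5) < 2 by decide,
    show ¬ (4 : Fin 5) < 2 by decide, if_true, if_false]
  generalize (PowerSeries.mk fun _ => (1 : ℤ)) = A at *
  generalize (PowerSeries.mk fun n => if 2 ∣ n then (1 : ℤ) else 0) = B at *
  calc _ = (A * (1 - PowerSeries.X)) ^ 2 * (B * (1 - PowerSeries.X ^ 2)) ^ 3 := by ring
    _ = 1 := by rw [h1, h2]; ring

open PowerSeries in
lemma hive_rec (n : ℕ) : (coeff n) ((PowerSeries.mk fun d => (hiveCount2 d : ℤ)) -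
    2 * ((PowerSeries.mk fun d => (hiveCount2 d : ℤ)) * X ^ 1) -
    2 * ((PowerSeries.mk fun d => (hiveCount2 d : ℤ)) * X ^ 2) +
    6 * ((PowerSeries.mk fun d => (hiveCount2 d : ℤ)) * X ^ 3) -
    6 * ((PowerSeries.mk fun d => (hiveCount2 d : ℤ)) * X ^ 5) +
    2 * ((PowerSeries.mk fun d => (hiveCount2 d : ℤ)) * X ^ 6) +
    2 * ((PowerSeries.mk fun d => (hiveCount2 d : ℤ)) * X ^ 7) -
    (PowerSeries.mk fun d => (hiveCount2 d : ℤ)) * X ^ 8) = if n = 0 then 1 else 0 := by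
  rw [← coeff_one, ← hive_gf]
  congr 1
  ring

/-- Counts with negative index read as zero. -/
noncomputable def hiveShift (n k : ℕ) : ℤ := if k ≤ n then (hiveCount2 (n - k) : ℤ) else 0

open PowerSeries in
lemma hive_recurrence (n : ℕ) : (hiveCount2 n : ℤ) - 2 * hiveShift n 1 - 2 * hiveShift n 2
    + 6 * hiveShift n 3 - 6 * hiveShift n 5 + 2 * hiveShift n 6 + 2 * hiveShift n 7
    - hiveShift n 8 = if n = 0 then 1 else 0 := by
  rw [← hive_rec n]
  have h2 : (2 : PowerSeries ℤ) = C 2 := by simp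
  have h6 : (6 : PowerSeries ℤ) = C 6 := by simp
  rw [h2, h6]
  simp only [map_sub, map_add, coeff_C_mul, coeff_mul_X_pow', coeff_mk, hiveShift]

/-- The generating function of the numbers of hives for `GL(2)` with `h₃₃ = d`
satisfies `(Σ m_d t^d) (1-t)² (1-t²)³ = 1`; in particular
`m₀, ..., m₉ = 1, 2, 6, 10, 20, 30, 50, 70, 105, 140`. -/
theorem hiveCount2_generating_function :
    (PowerSeries.mk fun d => (hiveCount2 d : ℤ)) *
      ((1 - PowerSeries.X) ^ 2 * (1 - PowerSeries.X ^ 2) ^ 3) = 1 ∧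
    hiveCount2 0 = 1 ∧ hiveCount2 1 = 2 ∧ hiveCount2 2 = 6 ∧ hiveCount2 3 = 10 ∧
    hiveCount2 4 = 20 ∧ hiveCount2 5 = 30 ∧ hiveCount2 6 = 50 ∧ hiveCount2 7 = 70 ∧
    hiveCount2 8 = 105 ∧ hiveCount2 9 = 140 := by
  refine ⟨hive_gf, ?_⟩
  have e0 := hive_recurrence 0
  have e1 := hive_recurrence 1
  have e2 := hive_recurrence 2
  have e3 := hive_recurrence 3
  have e4 := hive_recurrence 4
  have e5 := hive_recurrence 5
  have e6 := hive_recurrence 6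
  have e7 := hive_recurrence 7
  have e8 := hive_recurrence 8
  have e9 := hive_recurrence 9
  norm_num [hiveShift] at e0 e1 e2 e3 e4 e5 e6 e7 e8 e9
  omega
end

section
/- The monoid H(3) of hives for GL(3) is generated as a commutative monoid by the following ten hives (written as tuples (h_{11}, h_{21}, h_{22}, h_{31}, h_{32}, h_{33}, h_{41}, h_{42}, h_{43}, h_{44})): h_1 = (0,0,1,0,1,1,0,1,1,1), h_2 = (0,0,1,0,1,2,0,1,2,3), h_3 = (0,0,1,0,1,2,0,1,2,2), h_4 = (0,1,1,1,1,1,1,1,1,1), h_5 = (0,1,1,1,2,2,1,2,2,2), h_6 = (0,1,1,1,2,2,1,2,3,3), h_7 = (0,1,1,2,2,2,2,2,2,2), h_8 = (0,1,1,2,2,2,2,3,3,3), h_9 = (0,1,1,2,2,2,3,3,3,3), h_10 = (0,1,2,2,3,3,2,3,4,4). That is, every hive for GL(3) is an N-linear combination of h_1, ..., h_10. -/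
/-- A hive for `GL(3)`, written as a tuple
`(h₁₁, h₂₁, h₂₂, h₃₁, h₃₂, h₃₃, h₄₁, h₄₂, h₄₃, h₄₄)` (indices `0,...,9`):
`h₁₁ = 0`, the rhombus conditions hold, and the three boundary sequences are
non-negative dominant. -/
def IsHive3 (h : Fin 10 → ℤ) : Prop :=
  h 0 = 0 ∧
  -- rhombus conditions of the first type
  h 3 + h 2 ≤ h 1 + h 4 ∧
  h 6 + h 4 ≤ h 3 + h 7 ∧
  h 7 + h 5 ≤ h 4 + h 8 ∧
  -- rhombus conditions of the second type
  h 4 + h 0 ≤ h 1 + h 2 ∧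
  h 7 + h 1 ≤ h 3 + h 4 ∧
  h 8 + h 2 ≤ h 4 + h 5 ∧
  -- rhombus conditions of the third type
  h 5 + h 1 ≤ h 4 + h 2 ∧
  h 8 + h 3 ≤ h 7 + h 4 ∧
  h 9 + h 4 ≤ h 8 + h 5 ∧
  -- boundary sequence a: (h₂₂ - h₁₁, h₃₃ - h₂₂, h₄₄ - h₃₃)
  h 5 - h 2 ≤ h 2 - h 0 ∧ h 9 - h 5 ≤ h 5 - h 2 ∧ 0 ≤ h 9 - h 5 ∧
  -- boundary sequence b: (h₂₁ - h₁₁, h₃₁ - h₂₁, h₄₁ - h₃₁)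
  h 3 - h 1 ≤ h 1 - h 0 ∧ h 6 - h 3 ≤ h 3 - h 1 ∧ 0 ≤ h 6 - h 3 ∧
  -- boundary sequence c: (h₄₂ - h₄₁, h₄₃ - h₄₂, h₄₄ - h₄₃)
  h 8 - h 7 ≤ h 7 - h 6 ∧ h 9 - h 8 ≤ h 8 - h 7 ∧ 0 ≤ h 9 - h 8

/-- The ten generating hives of the hive monoid `H(3)`. -/
def hive3Gens : Fin 10 → Fin 10 → ℤ :=
  ![![0,0,1,0,1,1,0,1,1,1],
    ![0,0,1,0,1,2,0,1,2,3],
    ![0,0,1,0,1,2,0,1,2,2],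
    ![0,1,1,1,1,1,1,1,1,1],
    ![0,1,1,1,2,2,1,2,2,2],
    ![0,1,1,1,2,2,1,2,3,3],
    ![0,1,1,2,2,2,2,2,2,2],
    ![0,1,1,2,2,2,2,3,3,3],
    ![0,1,1,2,2,2,3,3,3,3],
    ![0,1,2,2,3,3,2,3,4,4]]

/-- The monoid `H(3)` of hives for `GL(3)` is generated as a commutative monoid by the
ten hives `h₁, ..., h₁₀`: each of them is a hive, and every hive for `GL(3)` is an
`ℕ`-linear combination of them. -/
theorem hive3_generation :
    (∀ k : Fin 10, IsHive3 (hive3Gens k)) ∧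
    (∀ h : Fin 10 → ℤ, IsHive3 h →
      ∃ m : Fin 10 → ℕ, h = fun j => ∑ k : Fin 10, (m k : ℤ) * hive3Gens k j) := by
  constructor
  · intro k
    unfold IsHive3
    fin_cases k <;> decide
  · intro h hh
    obtain ⟨h0, r1, r2, r3, r4, r5, r6, r7, r8, r9, a1, a2, a3, b1, b2, b3, c1, c2, c3⟩ := hh
    -- the multiplicity of the last generator: the smallest one making all others nonnegative
    obtain ⟨t, ht0, ht1, ht2⟩ : ∃ t : ℤ, 0 ≤ t ∧ h 2 + h 3 + h 8 - h 1 - h 5 - h 7 ≤ t ∧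
        (t = 0 ∨ t = h 2 + h 3 + h 8 - h 1 - h 5 - h 7) :=
      ⟨max 0 (h 2 + h 3 + h 8 - h 1 - h 5 - h 7), by omega, by omega, by omega⟩
    obtain ⟨m0, e0⟩ := Int.eq_ofNat_of_zero_le (a := h 2 + h 4 - h 1 - h 5 - t) (by omega)
    obtain ⟨m1, e1⟩ := Int.eq_ofNat_of_zero_le (a := h 9 - h 8) (by omega)
    obtain ⟨m2, e2⟩ := Int.eq_ofNat_of_zero_le (a := h 5 + h 8 - h 4 - h 9) (by omega)
    obtain ⟨m3, e3⟩ := Int.eq_ofNat_of_zero_le (a := h 1 + h 2 - h 4) (by omega)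
    obtain ⟨m4, e4⟩ := Int.eq_ofNat_of_zero_le
      (a := h 1 + h 5 + h 7 - h 2 - h 3 - h 8 + t) (by omega)
    obtain ⟨m5, e5⟩ := Int.eq_ofNat_of_zero_le (a := h 4 + h 8 - h 5 - h 7 - t) (by omega)
    obtain ⟨m6, e6⟩ := Int.eq_ofNat_of_zero_le (a := h 3 + h 4 - h 1 - h 7 - t) (by omega)
    obtain ⟨m7, e7⟩ := Int.eq_ofNat_of_zero_le (a := h 3 + h 7 - h 4 - h 6) (by omega)
    obtain ⟨m8, e8⟩ := Int.eq_ofNat_of_zero_le (a := h 6 - h 3) (by omega)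
    obtain ⟨m9, e9⟩ := Int.eq_ofNat_of_zero_le (a := t) ht0
    refine ⟨![m0, m1, m2, m3, m4, m5, m6, m7, m8, m9], ?_⟩
    funext j
    fin_cases j <;> simp [Fin.sum_univ_succ, hive3Gens] <;> omega
end

section
/- The monoid H(4) of hives for GL(4) is generated as a commutative monoid by the twenty hives h_1, ..., h_20 listed in the context. That is, every hive for GL(4) is an N-linear combination of h_1, ..., h_20. -/
/-- A hive for `GL(4)`, written as a tuple
`(h₁₁, h₂₁, h₂₂, h₃₁, h₃₂, h₃₃, h₄₁, h₄₂, h₄₃, h₄₄, h₅₁, h₅₂, h₅₃, h₅₄, h₅₅)`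
(indices `0,...,14`): `h₁₁ = 0`, the rhombus conditions hold, and the three
boundary sequences are non-negative dominant. -/
def IsHive4 (h : Fin 15 → ℤ) : Prop :=
  h 0 = 0 ∧
  -- rhombus conditions of the first type
  h 3 + h 2 ≤ h 1 + h 4 ∧
  h 6 + h 4 ≤ h 3 + h 7 ∧
  h 7 + h 5 ≤ h 4 + h 8 ∧
  h 10 + h 7 ≤ h 6 + h 11 ∧
  h 11 + h 8 ≤ h 7 + h 12 ∧
  h 12 + h 9 ≤ h 8 + h 13 ∧
  -- rhombus conditions of the second type
  h 4 + h 0 ≤ h 1 + h 2 ∧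
  h 7 + h 1 ≤ h 3 + h 4 ∧
  h 8 + h 2 ≤ h 4 + h 5 ∧
  h 11 + h 3 ≤ h 6 + h 7 ∧
  h 12 + h 4 ≤ h 7 + h 8 ∧
  h 13 + h 5 ≤ h 8 + h 9 ∧
  -- rhombus conditions of the third type
  h 5 + h 1 ≤ h 4 + h 2 ∧
  h 8 + h 3 ≤ h 7 + h 4 ∧
  h 9 + h 4 ≤ h 8 + h 5 ∧
  h 12 + h 6 ≤ h 11 + h 7 ∧
  h 13 + h 7 ≤ h 12 + h 8 ∧
  h 14 + h 8 ≤ h 13 + h 9 ∧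
  -- boundary sequence a: (h₂₂ - h₁₁, h₃₃ - h₂₂, h₄₄ - h₃₃, h₅₅ - h₄₄)
  h 5 - h 2 ≤ h 2 - h 0 ∧ h 9 - h 5 ≤ h 5 - h 2 ∧ h 14 - h 9 ≤ h 9 - h 5 ∧ 0 ≤ h 14 - h 9 ∧
  -- boundary sequence b: (h₂₁ - h₁₁, h₃₁ - h₂₁, h₄₁ - h₃₁, h₅₁ - h₄₁)
  h 3 - h 1 ≤ h 1 - h 0 ∧ h 6 - h 3 ≤ h 3 - h 1 ∧ h 10 - h 6 ≤ h 6 - h 3 ∧ 0 ≤ h 10 - h 6 ∧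
  -- boundary sequence c: (h₅₂ - h₅₁, h₅₃ - h₅₂, h₅₄ - h₅₃, h₅₅ - h₅₄)
  h 12 - h 11 ≤ h 11 - h 10 ∧ h 13 - h 12 ≤ h 12 - h 11 ∧ h 14 - h 13 ≤ h 13 - h 12 ∧
  0 ≤ h 14 - h 13

/-- The twenty generating hives of the hive monoid `H(4)`. -/
def hive4Gens : Fin 20 → Fin 15 → ℤ :=
  ![![0,0,1,0,1,1,0,1,1,1,0,1,1,1,1],
    ![0,0,1,0,1,2,0,1,2,2,0,1,2,2,2],
    ![0,0,1,0,1,2,0,1,2,3,0,1,2,3,3],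
    ![0,0,1,0,1,2,0,1,2,3,0,1,2,3,4],
    ![0,1,1,1,1,1,1,1,1,1,1,1,1,1,1],
    ![0,1,1,1,2,2,1,2,2,2,1,2,2,2,2],
    ![0,1,1,1,2,2,1,2,3,3,1,2,3,3,3],
    ![0,1,1,1,2,2,1,2,3,3,1,2,3,4,4],
    ![0,1,1,2,2,2,2,2,2,2,2,2,2,2,2],
    ![0,1,1,2,2,2,2,3,3,3,2,3,3,3,3],
    ![0,1,1,2,2,2,2,3,3,3,2,3,4,4,4],
    ![0,1,1,2,2,2,3,3,3,3,3,3,3,3,3],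
    ![0,1,1,2,2,2,3,3,3,3,3,4,4,4,4],
    ![0,1,1,2,2,2,3,3,3,3,4,4,4,4,4],
    ![0,1,2,2,3,3,2,3,4,4,2,3,4,4,4],
    ![0,1,2,2,3,3,2,3,4,4,2,3,4,5,5],
    ![0,1,2,2,3,4,2,4,5,5,2,4,5,6,6],
    ![0,1,2,2,3,3,3,4,4,4,3,4,5,5,5],
    ![0,1,2,2,3,4,3,4,5,5,3,4,5,6,6],
    ![0,2,2,3,4,4,4,5,5,5,4,5,6,6,6]]

set_option linter.unusedVariables false

/-- Propositional core: `pᵢ` says that the `i`-th rhombus inequality is strict. -/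
lemma sat_core (p0 p1 p2 p4 p5 p7 p8 p9 p10 p11 p12 p13 p14 p15 p16 : Prop)
    (c0 : p0 → p2 ∨ p8)
    (c1 : p7 → p2 ∨ p8)
    (c2 : p2 → p0 ∨ p7)
    (c3 : p8 → p0 ∨ p7)
    (c4 : p0 → p2 ∨ p13)
    (c5 : p12 → p2 ∨ p13)
    (c6 : p2 → p0 ∨ p12)
    (c7 : p13 → p0 ∨ p12)
    (c8 : p1 → p4 ∨ p10)
    (c9 : p9 → p4 ∨ p10)
    (c10 : p4 → p1 ∨ p9)
    (c11 : p10 → p1 ∨ p9)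
    (c12 : p1 → p4 ∨ p15)
    (c13 : p13 → p4 ∨ p15)
    (c14 : p4 → p1 ∨ p13)
    (c15 : p15 → p1 ∨ p13)
    (c16 : p2 → p5 ∨ p11)
    (c17 : p10 → p5 ∨ p11)
    (c18 : p5 → p2 ∨ p10)
    (c19 : p11 → p2 ∨ p10)
    (c20 : p2 → p5 ∨ p16)
    (c21 : p14 → p5 ∨ p16)
    (c22 : p5 → p2 ∨ p14)
    (c23 : p16 → p2 ∨ p14)
    (c24 : p7 → p8 ∨ p12)
    (c25 : p13 → p8 ∨ p12)
    (c26 : p8 → p7 ∨ p13)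
    (c27 : p12 → p7 ∨ p13)
    (c28 : p9 → p10 ∨ p13)
    (c29 : p15 → p10 ∨ p13)
    (c30 : p10 → p9 ∨ p15)
    (c31 : p13 → p9 ∨ p15)
    (c32 : p10 → p11 ∨ p14)
    (c33 : p16 → p11 ∨ p14)
    (c34 : p11 → p10 ∨ p16)
    (c35 : p14 → p10 ∨ p16)
    (c36 : p12 → p13 → p15 → False)
    (c37 : p14 → p16 → False)
    (c38 : p0 → p8 → p13 → p15 → False)
    (c39 : p0 → p2 → p11 → p16 → False)
    (c40 : p0 → p2 → p5 → False)
    (c41 : p7 → p8 → False)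
    (c42 : p1 → p10 → p11 → p15 → False)
    (c43 : p1 → p4 → False)
    (c44 : p9 → p10 → p11 → False)
    (c45 : p2 → p7 → p11 → p12 → p16 → False)
    (c46 : p2 → p5 → p7 → p12 → False)
    (c47 : p1 → p5 → p10 → p14 → p15 → False)
    (c48 : p4 → p9 → p12 → p13 → False)
    (c49 : p5 → p9 → p10 → p14 → False)
    (c50 : p0 → p4 → p8 → p9 → p13 → False) :
    ¬p0 ∧ ¬p1 ∧ ¬p2 ∧ ¬p4 ∧ ¬p5 ∧ ¬p7 ∧ ¬p8 ∧ ¬p9 ∧ ¬p10 ∧ ¬p11 ∧ ¬p12 ∧ ¬p13 ∧ ¬p14 ∧ ¬p15 ∧ ¬p16 := by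
  by_cases q1 : p1 <;>
  by_cases q4 : p4 <;>
  by_cases q9 : p9 <;>
  by_cases q16 : p16 <;>
  by_cases q2 : p2 <;>
  by_cases q13 : p13 <;>
  by_cases q7 : p7 <;>
  grind

lemma hive_nonneg (h : Fin 15 → ℤ) (hh : IsHive4 h) : 0 ≤ h 14 := by
  unfold IsHive4 at hh
  obtain ⟨z0, r1, r2, r3, r4, r5, r6, r7, r8, r9, r10, r11, r12, r13, r14, r15, r16, r17, r18, r19, r20, r21, r22, r23, r24, r25, r26, r27, r28, r29, r30⟩ := hh
  linarith

set_option maxHeartbeats 1000000 in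
/-- A hive with nonzero last entry stays a hive after subtracting a suitable generator. -/
lemma exists_sub (h : Fin 15 → ℤ) (hh : IsHive4 h) (h0 : h 14 ≠ 0) :
    ∃ k : Fin 20, IsHive4 (fun j => h j - hive4Gens k j) := by
  by_contra hne
  push Not at hne
  have h14 := hive_nonneg h hh
  replace h0 : 0 < h 14 := by omega
  unfold IsHive4 at hh
  obtain ⟨z0, r1, r2, r3, r4, r5, r6, r7, r8, r9, r10, r11, r12, r13, r14, r15, r16, r17, r18, r19, r20, r21, r22, r23, r24, r25, r26, r27, r28, r29, r30⟩ := hh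
  have s3 : ¬ h 14 + h 8 < h 13 + h 9 := by
    intro _; refine hne 2 ?_; simp [IsHive4, hive4Gens]; and_intros <;> linarith
  have s4 : ¬ h 13 < h 14 := by
    intro _; refine hne 3 ?_; simp [IsHive4, hive4Gens]; and_intros <;> linarith
  have s5 : ¬ h 4 + h 0 < h 1 + h 2 := by
    intro _; refine hne 4 ?_; simp [IsHive4, hive4Gens]; and_intros <;> linarith
  have s13 : ¬ h 10 + h 7 < h 6 + h 11 := by
    intro _; refine hne 12 ?_; simp [IsHive4, hive4Gens]; and_intros <;> linarith
  have s14 : ¬ h 6 < h 10 := by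
    intro _; refine hne 13 ?_; simp [IsHive4, hive4Gens]; and_intros <;> linarith
  push Not at s3 s4 s5 s13 s14
  have key := sat_core (h 3 + h 2 < h 1 + h 4)
    (h 6 + h 4 < h 3 + h 7)
    (h 7 + h 5 < h 4 + h 8)
    (h 11 + h 8 < h 7 + h 12)
    (h 12 + h 9 < h 8 + h 13)
    (h 7 + h 1 < h 3 + h 4)
    (h 8 + h 2 < h 4 + h 5)
    (h 11 + h 3 < h 6 + h 7)
    (h 12 + h 4 < h 7 + h 8)
    (h 13 + h 5 < h 8 + h 9)
    (h 5 + h 1 < h 4 + h 2)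
    (h 8 + h 3 < h 7 + h 4)
    (h 9 + h 4 < h 8 + h 5)
    (h 12 + h 6 < h 11 + h 7)
    (h 13 + h 7 < h 12 + h 8)
    (by intro _; by_contra! _; linarith)
    (by intro _; by_contra! _; linarith)
    (by intro _; by_contra! _; linarith)
    (by intro _; by_contra! _; linarith)
    (by intro _; by_contra! _; linarith)
    (by intro _; by_contra! _; linarith)
    (by intro _; by_contra! _; linarith)
    (by intro _; by_contra! _; linarith)
    (by intro _; by_contra! _; linarith)
    (by intro _; by_contra! _; linarith)
    (by intro _; by_contra! _; linarith)
    (by intro _; by_contra! _; linarith)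
    (by intro _; by_contra! _; linarith)
    (by intro _; by_contra! _; linarith)
    (by intro _; by_contra! _; linarith)
    (by intro _; by_contra! _; linarith)
    (by intro _; by_contra! _; linarith)
    (by intro _; by_contra! _; linarith)
    (by intro _; by_contra! _; linarith)
    (by intro _; by_contra! _; linarith)
    (by intro _; by_contra! _; linarith)
    (by intro _; by_contra! _; linarith)
    (by intro _; by_contra! _; linarith)
    (by intro _; by_contra! _; linarith)
    (by intro _; by_contra! _; linarith)
    (by intro _; by_contra! _; linarith)
    (by intro _; by_contra! _; linarith)
    (by intro _; by_contra! _; linarith)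
    (by intro _; by_contra! _; linarith)
    (by intro _; by_contra! _; linarith)
    (by intro _; by_contra! _; linarith)
    (by intro _; by_contra! _; linarith)
    (by intro _; by_contra! _; linarith)
    (by intro _; by_contra! _; linarith)
    (by intro _; by_contra! _; linarith)
    (by intro _; by_contra! _; linarith)
    (by intros; refine hne 0 ?_; simp [IsHive4, hive4Gens]; and_intros <;> linarith)
    (by intros; refine hne 1 ?_; simp [IsHive4, hive4Gens]; and_intros <;> linarith)
    (by intros; refine hne 5 ?_; simp [IsHive4, hive4Gens]; and_intros <;> linarith)
    (by intros; refine hne 6 ?_; simp [IsHive4, hive4Gens]; and_intros <;> linarith)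
    (by intros; refine hne 7 ?_; simp [IsHive4, hive4Gens]; and_intros <;> linarith)
    (by intros; refine hne 8 ?_; simp [IsHive4, hive4Gens]; and_intros <;> linarith)
    (by intros; refine hne 9 ?_; simp [IsHive4, hive4Gens]; and_intros <;> linarith)
    (by intros; refine hne 10 ?_; simp [IsHive4, hive4Gens]; and_intros <;> linarith)
    (by intros; refine hne 11 ?_; simp [IsHive4, hive4Gens]; and_intros <;> linarith)
    (by intros; refine hne 14 ?_; simp [IsHive4, hive4Gens]; and_intros <;> linarith)
    (by intros; refine hne 15 ?_; simp [IsHive4, hive4Gens]; and_intros <;> linarith)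
    (by intros; refine hne 16 ?_; simp [IsHive4, hive4Gens]; and_intros <;> linarith)
    (by intros; refine hne 17 ?_; simp [IsHive4, hive4Gens]; and_intros <;> linarith)
    (by intros; refine hne 18 ?_; simp [IsHive4, hive4Gens]; and_intros <;> linarith)
    (by intros; refine hne 19 ?_; simp [IsHive4, hive4Gens]; and_intros <;> linarith)
  simp only [not_lt] at key
  obtain ⟨k0, k1, k2, k4, k5, k7, k8, k9, k10, k11, k12, k13, k14, k15, k16⟩ := key
  linarith

lemma hive_zero (h : Fin 15 → ℤ) (hh : IsHive4 h) (h0 : h 14 = 0) (j : Fin 15) : h j = 0 := by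
  unfold IsHive4 at hh
  fin_cases j <;> simp <;> omega

lemma gens_last (k : Fin 20) : 0 < hive4Gens k 14 := by
  fin_cases k <;> decide

lemma hive_gen (n : ℕ) : ∀ h : Fin 15 → ℤ, IsHive4 h → h 14 ≤ n →
    ∃ m : Fin 20 → ℕ, h = fun j => ∑ k : Fin 20, (m k : ℤ) * hive4Gens k j := by
  induction n with
  | zero =>
    intro h hh hn
    have := hive_nonneg h hh
    refine ⟨fun _ => 0, funext fun j => ?_⟩
    rw [hive_zero h hh (by push_cast at hn; omega) j]
    simp
  | succ n ih =>
    intro h hh hn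
    by_cases h0 : h 14 = 0
    · refine ⟨fun _ => 0, funext fun j => ?_⟩
      rw [hive_zero h hh h0 j]
      simp
    · obtain ⟨k, hk⟩ := exists_sub h hh h0
      have hl := gens_last k
      obtain ⟨m, hm⟩ := ih _ hk (by push_cast at hn; omega)
      refine ⟨fun i => m i + if i = k then 1 else 0, funext fun j => ?_⟩
      have hj := congrFun hm j
      simp [add_mul, Finset.sum_add_distrib, ← hj]

/-- The monoid `H(4)` of hives for `GL(4)` is generated as a commutative monoid by the
twenty hives `h₁, ..., h₂₀`: each of them is a hive, and every hive for `GL(4)` is an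
`ℕ`-linear combination of them. -/
theorem hive4_generation :
    (∀ k : Fin 20, IsHive4 (hive4Gens k)) ∧
    (∀ h : Fin 15 → ℤ, IsHive4 h →
      ∃ m : Fin 20 → ℕ, h = fun j => ∑ k : Fin 20, (m k : ℤ) * hive4Gens k j) := by
  refine ⟨fun k => ?_, fun h hh => hive_gen (h 14).toNat h hh (Int.self_le_toNat _)⟩
  fin_cases k <;> simp [IsHive4, hive4Gens]
end

section
/- For each natural number d, let m_d denote the number of hives h for GL(4) with h_{55} = d. Then the generating function identity (Σ_{d ≥ 0} m_d t^d) · (1−t)^4 (1−t^2)^6 (1−t^12)^4 = 1 − 2t − 2t^2 + 10t^3 − 2t^4 − 24t^5 + 22t^6 + 32t^7 − 54t^8 − 18t^9 + 80t^10 − 14t^11 − 72t^12 + 34t^13 + 44t^14 − 18t^15 − 25t^16 − 18t^17 + 44t^18 + 34t^19 − 72t^20 − 14t^21 + 80t^22 − 18t^23 − 54t^24 + 32t^25 + 22t^26 − 24t^27 − 2t^28 + 10t^29 − 2t^30 − 2t^31 + t^32 holds in the ring of formal power series Z[[t]]. In particular m_0 = 1, m_1 = 2, m_2 = 6, m_3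 = 14, m_4 = 34, m_5 = 68, m_6 = 142, m_7 = 268, m_8 = 508, m_9 = 902. -/
/-- `hiveCount4 d` is the number of hives for `GL(4)` with top entry `h₅₅ = d`. -/
noncomputable def hiveCount4 (d : ℕ) : ℕ :=
  Set.ncard {h : Fin 15 → ℤ | IsHive4 h ∧ h 14 = (d : ℤ)}

open PowerSeries in
/-- generating function of a weight -/
noncomputable def hgf {α : Type} (w : α → ℕ) : PowerSeries ℤ :=
  PowerSeries.mk fun d => (Nat.card {a // w a = d} : ℤ)

def HFin {α : Type} (w : α → ℕ) : Prop := ∀ d, Finite {a // w a = d}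

theorem hgf_congr {α β : Type} (e : α ≃ β) (w : α → ℕ) (w' : β → ℕ)
    (h : ∀ a, w' (e a) = w a) : hgf w = hgf w' := by
  ext d
  simp only [hgf, PowerSeries.coeff_mk]
  congr 1
  exact Nat.card_congr (e.subtypeEquiv (fun a => by rw [h]))

theorem HFin_congr {α β : Type} (e : α ≃ β) (w : α → ℕ) (w' : β → ℕ)
    (h : ∀ a, w' (e a) = w a) (hw : HFin w) : HFin w' := by
  intro d
  have := hw d
  exact Finite.of_equiv _ (e.subtypeEquiv (p := fun a => w a = d) (q := fun b => w' b = d)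
    (fun a => by rw [h]))

theorem hgf_unit (c : ℕ) : hgf (fun _ : Unit => c) = PowerSeries.X ^ c := by
  ext d
  simp only [hgf, PowerSeries.coeff_mk, PowerSeries.coeff_X_pow]
  by_cases h : c = d
  · subst h; simp
  · have : IsEmpty {a : Unit // c = d} := ⟨fun a => h a.2⟩
    simp [h, Ne.symm h]

theorem HFin_unit (c : ℕ) : HFin (fun _ : Unit => c) := fun _ => inferInstance

theorem HFin_prod {α : Type} (w : α → ℕ) (hw : HFin w) (k : ℕ) (hk : 0 < k) :
    HFin (fun p : ℕ × α => k * p.1 + w p.2) := by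
  intro d
  have hS : Finite {a // w a ≤ d} := by
    have h2 : ({a | w a ≤ d} : Set α) = ⋃ e ∈ Set.Iic d, {a | w a = e} := by
      ext a; simp
    have h3 : ({a | w a ≤ d} : Set α).Finite := by
      rw [h2]
      exact (Set.finite_Iic d).biUnion (fun e _ => Set.finite_coe_iff.mp (hw e))
    exact h3
  let f : {p : ℕ × α // k * p.1 + w p.2 = d} → Fin (d + 1) × {a // w a ≤ d} := fun p =>
    (⟨p.1.1, by nlinarith [p.2, Nat.zero_le (w p.1.2), Nat.zero_le p.1.1]⟩,
      ⟨p.1.2, by have := p.2; omega⟩)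
  refine Finite.of_injective f ?_
  rintro ⟨⟨n, a⟩, h⟩ ⟨⟨n', a'⟩, h'⟩ hf
  simpa [f] using hf

theorem hgf_prod {α : Type} (w : α → ℕ) (hw : HFin w) (k : ℕ) (hk : 0 < k) :
    hgf (fun p : ℕ × α => k * p.1 + w p.2) * (1 - PowerSeries.X ^ k) = hgf w := by
  have hf := HFin_prod w hw k hk
  ext d
  rw [mul_sub, mul_one, map_sub, PowerSeries.coeff_mul_X_pow']
  simp only [hgf, PowerSeries.coeff_mk]
  have h0 := hw d
  have h1 := hf d
  have h2 : Nat.card {p : ℕ × α // k * p.1 + w p.2 = d} =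
      Nat.card {a // w a = d} + Nat.card {p : ℕ × α // k * p.1 + w p.2 + k = d} := by
    have : Finite {p : ℕ × α // k * p.1 + w p.2 + k = d} := by
      have := hf (d - k)
      refine Finite.of_injective
        (β := {p : ℕ × α // k * p.1 + w p.2 = d - k}) (fun p => ⟨p.1, by have := p.2; omega⟩) ?_
      intro p q h
      simpa [Subtype.ext_iff] using h
    rw [← Nat.card_sum]
    refine Nat.card_congr ⟨fun p => match p with
      | ⟨(0, a), h⟩ => Sum.inl ⟨a, by simpa using h⟩
      | ⟨(n + 1, a), h⟩ => Sum.inr ⟨(n, a), by simp only at h ⊢; rw [← h]; ring⟩,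
      fun s => match s with
      | Sum.inl ⟨a, h⟩ => ⟨(0, a), by simpa using h⟩
      | Sum.inr ⟨(n, a), h⟩ => ⟨(n + 1, a), by simp only at h ⊢; rw [← h]; ring⟩, ?_, ?_⟩
    · rintro ⟨⟨_ | n, a⟩, h⟩ <;> rfl
    · rintro (⟨a, h⟩ | ⟨⟨n, a⟩, h⟩) <;> rfl
  rw [h2]
  split_ifs with h
  · have : Nat.card {p : ℕ × α // k * p.1 + w p.2 + k = d} =
        Nat.card {p : ℕ × α // k * p.1 + w p.2 = d - k} :=
      Nat.card_congr (Equiv.subtypeEquivRight (fun p => by omega))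
    rw [this]; push_cast; ring
  · have : IsEmpty {p : ℕ × α // k * p.1 + w p.2 + k = d} := ⟨fun p => h (by have := p.2; omega)⟩
    simp

theorem HFin_fin {n : ℕ} {β : Type} (w : Fin n × β → ℕ) (hw : ∀ k, HFin (fun b => w (k, b))) :
    HFin w := by
  intro d
  have := fun k => hw k d
  refine Finite.of_injective (β := Σ k : Fin n, {b // w (k, b) = d})
    (fun p => ⟨p.1.1, p.1.2, p.2⟩) ?_
  rintro ⟨⟨k, b⟩, h⟩ ⟨⟨k', b'⟩, h'⟩ hh
  simp only [Sigma.mk.injEq] at hh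
  obtain ⟨rfl, h2⟩ := hh
  simpa using h2

theorem hgf_fin {n : ℕ} {β : Type} (w : Fin n × β → ℕ) (hw : ∀ k, HFin (fun b => w (k, b))) :
    hgf w = ∑ k : Fin n, hgf (fun b => w (k, b)) := by
  ext d
  have := fun k => hw k d
  simp only [hgf, PowerSeries.coeff_mk, map_sum]
  rw [← Nat.cast_sum, ← Nat.card_sigma]
  congr 1
  exact Nat.card_congr ⟨fun p => ⟨p.1.1, p.1.2, p.2⟩, fun s => ⟨(s.1, s.2.1), s.2.2⟩,
    fun _ => rfl, fun _ => rfl⟩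

/-- degree of the minimal hive over a point of the three dimensional fan -/
def hdeg (x y z : ℤ) : ℤ :=
  3 * x + 4 * y + 3 * z - 4 * min 0 x - 4 * min 0 (min y (y + z)) - 2 * min 0 y
    - 3 * min 0 (min x (x - z)) - 2 * min 0 z - min 0 (min (-y) (x - y))

theorem hdeg_nonneg (x y z : ℤ) : 0 ≤ hdeg x y z := by
  unfold hdeg; omega

def henc : Fin 14 × ℕ × ℕ × ℕ × Unit → ℤ × ℤ × ℤ
  | (0, a, b, c, _) => (a + c, b, c)
  | (1, a, b, c, _) => (c, b, c + 1 + a)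
  | (2, a, b, c, _) => (a + c, -1 - b, c)
  | (3, a, b, c, _) => (c, -1 - b, c + 1 + a)
  | (4, a, b, c, _) => (a, b + c + 1, -1 - c)
  | (5, a, b, c, _) => (a, b, -1 - b - c)
  | (6, a, b, c, _) => (a, -1 - b, -1 - c)
  | (7, a, b, c, _) => (-1 - a, b, c)
  | (8, a, b, c, _) => (-1 - a, b + c + 1, -1 - c)
  | (9, a, b, c, _) => (-1 - a, b, -1 - b - c)
  | (10, a, b, c, _) => (-1 - a, -1 - a - b, c)
  | (11, a, b, c, _) => (-2 - a - b, -1 - b, c)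
  | (12, a, b, c, _) => (-1 - a, -1 - a - b, -1 - c)
  | (13, a, b, c, _) => (-2 - a - b, -1 - b, -1 - c)

def hdec (v : ℤ × ℤ × ℤ) : Fin 14 × ℕ × ℕ × ℕ × Unit :=
  let x := v.1
  let y := v.2.1
  let z := v.2.2
  if 0 ≤ x then
    if 0 ≤ z then
      if 0 ≤ y then
        if z ≤ x then (0, (x - z).toNat, y.toNat, z.toNat, ())
        else (1, (z - x - 1).toNat, y.toNat, x.toNat, ())
      else
        if z ≤ x then (2, (x - z).toNat, (-1 - y).toNat, z.toNat, ())
        else (3, (z - x - 1).toNat, (-1 - y).toNat, x.toNat, ())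
    else
      if 0 ≤ y then
        if 0 ≤ y + z then (4, x.toNat, (y + z).toNat, (-1 - z).toNat, ())
        else (5, x.toNat, y.toNat, (-1 - y - z).toNat, ())
      else (6, x.toNat, (-1 - y).toNat, (-1 - z).toNat, ())
  else
    if 0 ≤ y then
      if 0 ≤ z then (7, (-1 - x).toNat, y.toNat, z.toNat, ())
      else
        if 0 ≤ y + z then (8, (-1 - x).toNat, (y + z).toNat, (-1 - z).toNat, ())
        else (9, (-1 - x).toNat, y.toNat, (-1 - y - z).toNat, ())
    else
      if 0 ≤ z then
        if y ≤ x then (10, (-1 - x).toNat, (x - y).toNat, z.toNat, ())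
        else (11, (y - x - 1).toNat, (-1 - y).toNat, z.toNat, ())
      else
        if y ≤ x then (12, (-1 - x).toNat, (x - y).toNat, (-1 - z).toNat, ())
        else (13, (y - x - 1).toNat, (-1 - y).toNat, (-1 - z).toNat, ())

def hequiv : Fin 14 × ℕ × ℕ × ℕ × Unit ≃ ℤ × ℤ × ℤ where
  toFun := henc
  invFun := hdec
  left_inv := by
    rintro ⟨k, a, b, c, ⟨⟩⟩
    have key : ∀ v, v = henc (k, a, b, c, ()) → hdec v = (k, a, b, c, ()) := by
      rintro ⟨x, y, z⟩ h
      fin_cases k <;>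
        simp only [Fin.reduceFinMk, Fin.zero_eta, Fin.mk_one, henc, Prod.mk.injEq] at h <;>
        obtain ⟨h1, h2, h3⟩ := h <;> simp only [hdec] <;> split_ifs <;>
        first
        | omega
        | (simp only [Fin.reduceFinMk, Fin.zero_eta, Fin.mk_one, Prod.mk.injEq, and_true,
            true_and]; omega)
    exact key _ rfl
  right_inv := by
    rintro ⟨x, y, z⟩
    simp only [hdec]
    split_ifs <;> simp only [henc, Prod.mk.injEq] <;> omega

def hc : Fin 14 → ℕ := ![0, 6, 2, 8, 4, 3, 5, 5, 9, 8, 6, 11, 9, 14]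
def hd1 : Fin 14 → ℕ := ![3, 6, 3, 6, 3, 3, 3, 5, 5, 5, 6, 5, 6, 5]
def hd2 : Fin 14 → ℕ := ![5, 5, 2, 2, 5, 4, 2, 5, 5, 4, 2, 6, 2, 6]
def hd3 : Fin 14 → ℕ := ![6, 6, 6, 6, 4, 3, 3, 6, 4, 3, 6, 6, 3, 3]

def hleaf (k : Fin 14) : ℕ × ℕ × ℕ × Unit → ℕ := fun p =>
  hd1 k * p.1 + (hd2 k * p.2.1 + (hd3 k * p.2.2.1 + hc k))

theorem hdeg_leaf (p : Fin 14 × ℕ × ℕ × ℕ × Unit) :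
    (hdeg (hequiv p).1 (hequiv p).2.1 (hequiv p).2.2).toNat = hleaf p.1 p.2 := by
  obtain ⟨k, a, b, c, ⟨⟩⟩ := p
  simp only [hequiv, Equiv.coe_fn_mk]
  fin_cases k <;> simp [Fin.reduceFinMk, henc, hdeg, hleaf, hd1, hd2, hd3, hc] <;> omega

theorem hpos1 (k : Fin 14) : 0 < hd1 k := by revert k; decide
theorem hpos2 (k : Fin 14) : 0 < hd2 k := by revert k; decide
theorem hpos3 (k : Fin 14) : 0 < hd3 k := by revert k; decide

theorem HFin_leaf (k : Fin 14) : HFin (hleaf k) :=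
  HFin_prod _ (HFin_prod _ (HFin_prod _ (HFin_unit (hc k)) _ (hpos3 k)) _ (hpos2 k)) _ (hpos1 k)

open PowerSeries in
theorem hgf_leaf (k : Fin 14) :
    hgf (hleaf k) * ((1 - X ^ hd1 k) * (1 - X ^ hd2 k) * (1 - X ^ hd3 k)) = X ^ hc k := by
  have f3 := HFin_prod _ (HFin_unit (hc k)) _ (hpos3 k)
  have f2 := HFin_prod _ f3 _ (hpos2 k)
  have e3 := hgf_prod _ (HFin_unit (hc k)) _ (hpos3 k)
  have e2 := hgf_prod _ f3 _ (hpos2 k)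
  have e1 : hgf (hleaf k) * _ = _ := hgf_prod _ f2 _ (hpos1 k)
  rw [← mul_assoc, ← mul_assoc, e1, e2, e3, hgf_unit]

def hw0 (v : ℤ × ℤ × ℤ) : ℕ := (hdeg v.1 v.2.1 v.2.2).toNat

theorem HFin_w0 : HFin hw0 :=
  HFin_congr hequiv (fun p => hleaf p.1 p.2) hw0 hdeg_leaf (HFin_fin _ HFin_leaf)

theorem hgf_w0 : hgf hw0 = ∑ k, hgf (hleaf k) := by
  rw [← hgf_congr hequiv (fun p => hleaf p.1 p.2) hw0 hdeg_leaf]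
  exact hgf_fin _ HFin_leaf

abbrev HPar : Type := ℕ × ℕ × ℕ × ℕ × ℕ × ℕ × ℕ × ℕ × ℕ × ℕ × ℕ × (ℤ × ℤ × ℤ)

def hW : HPar → ℕ := fun p =>
  4 * p.1 + (4 * p.2.1 + (2 * p.2.2.1 + (3 * p.2.2.2.1 + (2 * p.2.2.2.2.1 +
  (1 * p.2.2.2.2.2.1 + (4 * p.2.2.2.2.2.2.1 + (1 * p.2.2.2.2.2.2.2.1 +
  (3 * p.2.2.2.2.2.2.2.2.1 + (4 * p.2.2.2.2.2.2.2.2.2.1 + (4 * p.2.2.2.2.2.2.2.2.2.2.1 +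
  hw0 p.2.2.2.2.2.2.2.2.2.2.2))))))))))

/-- linear parametrization of the arrays -/
def hlin (b2 b3 b5 b6 b8 b9 n1 n4 n7 np nq x y z : ℤ) : Fin 15 → ℤ :=
  ![0,
    b2 + b3 + b5 + b6 + n1 + n4 + nq + x + y,
    b2 + b3 + b5 + b6 + b8 + b9 + n1 + n4 + n7 + np + nq + x + y + z,
    2 * b2 + b3 + 2 * b5 + 2 * b6 + 2 * n1 + n4 + 2 * nq + 2 * x + 2 * y,
    2 * b2 + 2 * b3 + 2 * b5 + 2 * b6 + b8 + b9 + 2 * n1 + n4 + n7 + np + 2 * nq + 2 * x + 2 * y + z,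
    2 * b2 + 2 * b3 + 2 * b5 + 2 * b6 + 2 * b8 + b9 + 2 * n1 + n4 + 2 * n7 + 2 * np + 2 * nq + 2 * x + 2 * y + 2 * z,
    2 * b2 + b3 + 2 * b5 + 3 * b6 + 3 * n1 + n4 + 3 * nq + 2 * x + 2 * y,
    3 * b2 + 2 * b3 + 2 * b5 + 3 * b6 + b8 + b9 + 3 * n1 + n4 + n7 + np + 3 * nq + 3 * x + 2 * y + z,
    3 * b2 + 3 * b3 + 2 * b5 + 3 * b6 + 2 * b8 + b9 + 3 * n1 + n4 + 2 * n7 + 2 * np + 3 * nq + 3 * x + 3 * y + 2 * z,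
    3 * b2 + 3 * b3 + 2 * b5 + 3 * b6 + 2 * b8 + b9 + 3 * n1 + n4 + 3 * n7 + 3 * np + 3 * nq + 3 * x + 3 * y + 2 * z,
    2 * b2 + b3 + 2 * b5 + 3 * b6 + 3 * n1 + n4 + 4 * nq + 2 * x + 2 * y,
    3 * b2 + 2 * b3 + 2 * b5 + 3 * b6 + b8 + b9 + 4 * n1 + n4 + n7 + np + 4 * nq + 3 * x + 2 * y + z,
    4 * b2 + 3 * b3 + 2 * b5 + 3 * b6 + 2 * b8 + b9 + 4 * n1 + n4 + 2 * n7 + 2 * np + 4 * nq + 3 * x + 3 * y + 2 * z,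
    4 * b2 + 4 * b3 + 2 * b5 + 3 * b6 + 2 * b8 + b9 + 4 * n1 + n4 + 3 * n7 + 3 * np + 4 * nq + 3 * x + 4 * y + 3 * z,
    4 * b2 + 4 * b3 + 2 * b5 + 3 * b6 + 2 * b8 + b9 + 4 * n1 + n4 + 3 * n7 + 4 * np + 4 * nq + 3 * x + 4 * y + 3 * z]

def hm3 (y z : ℤ) : ℤ := min 0 (min y (y + z))
def hm6 (x z : ℤ) : ℤ := min 0 (min x (x - z))
def hm9 (x y : ℤ) : ℤ := min 0 (min (-y) (x - y))

def hmap : HPar → Fin 15 → ℤ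
  | (n2, n3, n5, n6, n8, n9, n1, n4, n7, np, nq, x, y, z) =>
    hlin (n2 - min 0 x) (n3 - hm3 y z) (n5 - min 0 y) (n6 - hm6 x z) (n8 - min 0 z)
      (n9 - hm9 x y) n1 n4 n7 np nq x y z

def hx (h : Fin 15 → ℤ) : ℤ := h 3 - h 6 - h 4 - h 12 + h 11 + h 8
def hy (h : Fin 15 → ℤ) : ℤ := h 3 - h 7 - h 1 - h 5 + h 8 + h 2
def hz (h : Fin 15 → ℤ) : ℤ := h 5 - h 9 - h 4 - h 12 + h 13 + h 7

def hinv (h : Fin 15 → ℤ) : HPar :=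
  ((h 7 + h 12 - h 11 - h 8 + min 0 (hx h)).toNat,
   (h 1 + h 4 - h 3 - h 2 + hm3 (hy h) (hz h)).toNat,
   (h 4 + h 5 - h 8 - h 2 + min 0 (hy h)).toNat,
   (h 6 + h 7 - h 11 - h 3 + hm6 (hx h) (hz h)).toNat,
   (h 12 + h 8 - h 13 - h 7 + min 0 (hz h)).toNat,
   (h 4 + h 2 - h 5 - h 1 + hm9 (hx h) (hy h)).toNat,
   (h 6 + h 11 - h 10 - h 7).toNat,
   (h 1 + h 2 - h 4 - h 0).toNat,
   (h 13 + h 9 - h 14 - h 8).toNat,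
   (h 14 - h 13).toNat,
   (h 10 - h 6).toNat,
   hx h, hy h, hz h)

theorem hinv_hmap (p : HPar) : hinv (hmap p) = p := by
  obtain ⟨n2, n3, n5, n6, n8, n9, n1, n4, n7, np, nq, x, y, z⟩ := p
  have ex : hx (hmap (n2, n3, n5, n6, n8, n9, n1, n4, n7, np, nq, x, y, z)) = x := by
    simp [hx, hmap, hlin]; ring
  have ey : hy (hmap (n2, n3, n5, n6, n8, n9, n1, n4, n7, np, nq, x, y, z)) = y := by
    simp [hy, hmap, hlin]; ring
  have ez : hz (hmap (n2, n3, n5, n6, n8, n9, n1, n4, n7, np, nq, x, y, z)) = z := by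
    simp [hz, hmap, hlin]; ring
  simp only [hinv, ex, ey, ez]
  simp only [hmap]
  generalize hm3 y z = m3
  generalize hm6 x z = m6
  generalize hm9 x y = m9
  generalize min 0 x = m2
  generalize min 0 y = m5
  generalize min 0 z = m8
  simp only [hlin, Prod.mk.injEq, and_true]
  refine ⟨?_, ?_, ?_, ?_, ?_, ?_, ?_, ?_, ?_, ?_, ?_⟩ <;> simp <;> omega

theorem haux2 (a b : ℤ) (h1 : 0 ≤ a) (h2 : 0 ≤ a + b) : 0 ≤ a + min 0 b := by omega

theorem haux3 (a b c : ℤ) (h1 : 0 ≤ a) (h2 : 0 ≤ a + b) (h3 : 0 ≤ a + c) :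
    0 ≤ a + min 0 (min b c) := by omega

theorem hmap_hinv (h : Fin 15 → ℤ) (hh : IsHive4 h) : hmap (hinv h) = h := by
  simp only [hmap, hinv]
  obtain ⟨h0, r1, r2, r3, r4, r5, r6, s1, s2, s3, s4, s5, s6, t1, t2, t3, t4, t5, t6, a⟩ := hh
  have ep : 0 ≤ h 14 - h 13 := a.2.2.2.2.2.2.2.2.2.2.2
  have eq : 0 ≤ h 10 - h 6 := a.2.2.2.2.2.2.2.1
  clear a
  have e2 : 0 ≤ h 7 + h 12 - h 11 - h 8 + min 0 (hx h) := by
    apply haux2 <;> (try simp only [hx, hy, hz]) <;> linarith only [r2, r5]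
  have e3 : 0 ≤ h 1 + h 4 - h 3 - h 2 + hm3 (hy h) (hz h) := by
    apply haux3 <;> (try simp only [hx, hy, hz]) <;> linarith only [r1, r3, r6]
  have e5 : 0 ≤ h 4 + h 5 - h 8 - h 2 + min 0 (hy h) := by
    apply haux2 <;> (try simp only [hx, hy, hz]) <;> linarith only [s2, s3]
  have e6 : 0 ≤ h 6 + h 7 - h 11 - h 3 + hm6 (hx h) (hz h) := by
    apply haux3 <;> (try simp only [hx, hy, hz]) <;> linarith only [s4, s5, s6]
  have e8 : 0 ≤ h 12 + h 8 - h 13 - h 7 + min 0 (hz h) := by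
    apply haux2 <;> (try simp only [hx, hy, hz]) <;> linarith only [t3, t5]
  have e9 : 0 ≤ h 4 + h 2 - h 5 - h 1 + hm9 (hx h) (hy h) := by
    apply haux3 <;> (try simp only [hx, hy, hz]) <;> linarith only [t1, t2, t4]
  have e1 : 0 ≤ h 6 + h 11 - h 10 - h 7 := by linarith only [r4]
  have e4 : 0 ≤ h 1 + h 2 - h 4 - h 0 := by linarith only [s1]
  have e7 : 0 ≤ h 13 + h 9 - h 14 - h 8 := by linarith only [t6]
  rw [Int.toNat_of_nonneg e2, Int.toNat_of_nonneg e3, Int.toNat_of_nonneg e5,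
    Int.toNat_of_nonneg e6, Int.toNat_of_nonneg e8, Int.toNat_of_nonneg e9,
    Int.toNat_of_nonneg e1, Int.toNat_of_nonneg e4, Int.toNat_of_nonneg e7,
    Int.toNat_of_nonneg ep, Int.toNat_of_nonneg eq]
  simp only [add_sub_cancel_right, hx, hy, hz]
  clear e1 e2 e3 e4 e5 e6 e7 e8 e9 ep eq r1 r2 r3 r4 r5 r6 s1 s2 s3 s4 s5 s6 t1 t2 t3 t4 t5 t6
  funext i
  fin_cases i <;> simp [hlin] <;> linarith only [h0]

theorem hmap_hive (p : HPar) : IsHive4 (hmap p) ∧ hmap p 14 = (hW p : ℤ) := by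
  obtain ⟨n2, n3, n5, n6, n8, n9, n1, n4, n7, np, nq, x, y, z⟩ := p
  have h2 : min 0 x ≤ 0 ∧ min 0 x ≤ x := by omega
  have h5 : min 0 y ≤ 0 ∧ min 0 y ≤ y := by omega
  have h8 : min 0 z ≤ 0 ∧ min 0 z ≤ z := by omega
  have h3 : hm3 y z ≤ 0 ∧ hm3 y z ≤ y ∧ hm3 y z ≤ y + z := by unfold hm3; omega
  have h6 : hm6 x z ≤ 0 ∧ hm6 x z ≤ x ∧ hm6 x z ≤ x - z := by unfold hm6; omega
  have h9 : hm9 x y ≤ 0 ∧ hm9 x y ≤ -y ∧ hm9 x y ≤ x - y := by unfold hm9; omega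
  constructor
  · simp only [hmap]
    generalize hm3 y z = m3 at *
    generalize hm6 x z = m6 at *
    generalize hm9 x y = m9 at *
    generalize min 0 x = m2 at *
    generalize min 0 y = m5 at *
    generalize min 0 z = m8 at *
    unfold IsHive4
    refine ⟨?_, ?_, ?_, ?_, ?_, ?_, ?_, ?_, ?_, ?_, ?_, ?_, ?_, ?_, ?_, ?_, ?_, ?_, ?_,
      ?_, ?_, ?_, ?_, ?_, ?_, ?_, ?_, ?_, ?_, ?_, ?_⟩ <;> simp [hlin] <;> linarith
  · simp only [hW, hw0]
    push_cast
    rw [Int.toNat_of_nonneg (hdeg_nonneg _ _ _)]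
    simp [hmap, hlin, hdeg, hm3, hm6, hm9]
    ring

theorem hiveCount4_eq (d : ℕ) : hiveCount4 d = Nat.card {p : HPar // hW p = d} := by
  unfold hiveCount4
  rw [← Nat.card_coe_set_eq]
  refine Nat.card_congr ⟨fun h => ⟨hinv h.1, ?_⟩, fun p => ⟨hmap p.1, ?_⟩, ?_, ?_⟩
  · have h1 := hmap_hinv h.1 h.2.1
    have h2 := (hmap_hive (hinv h.1)).2
    rw [h1, h.2.2] at h2
    exact_mod_cast h2.symm
  · exact ⟨(hmap_hive p.1).1, by rw [(hmap_hive p.1).2, p.2]⟩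
  · intro h
    exact Subtype.ext (hmap_hinv h.1 h.2.1)
  · intro p
    exact Subtype.ext (hinv_hmap p.1)

theorem hive_gf_eq : (PowerSeries.mk fun d => (hiveCount4 d : ℤ)) = hgf hW := by
  ext d
  simp only [hgf, PowerSeries.coeff_mk, hiveCount4_eq]

open PowerSeries in
theorem hgf_W : hgf hW * ((1 - X ^ 4) * (1 - X ^ 4) * (1 - X ^ 2) * (1 - X ^ 3) * (1 - X ^ 2) *
    (1 - X ^ 1) * (1 - X ^ 4) * (1 - X ^ 1) * (1 - X ^ 3) * (1 - X ^ 4) * (1 - X ^ 4)) =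
    hgf hw0 := by
  have f0 := HFin_w0
  have f1 := HFin_prod _ f0 4 (by norm_num)
  have f2 := HFin_prod _ f1 4 (by norm_num)
  have f3 := HFin_prod _ f2 3 (by norm_num)
  have f4 := HFin_prod _ f3 1 (by norm_num)
  have f5 := HFin_prod _ f4 4 (by norm_num)
  have f6 := HFin_prod _ f5 1 (by norm_num)
  have f7 := HFin_prod _ f6 2 (by norm_num)
  have f8 := HFin_prod _ f7 3 (by norm_num)
  have f9 := HFin_prod _ f8 2 (by norm_num)
  have f10 := HFin_prod _ f9 4 (by norm_num)
  have e11 : hgf hW * _ = _ := hgf_prod _ f10 4 (by norm_num)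
  simp only [← mul_assoc]
  rw [e11, hgf_prod _ f9 4 (by norm_num), hgf_prod _ f8 2 (by norm_num),
    hgf_prod _ f7 3 (by norm_num), hgf_prod _ f6 2 (by norm_num), hgf_prod _ f5 1 (by norm_num),
    hgf_prod _ f4 4 (by norm_num), hgf_prod _ f3 1 (by norm_num), hgf_prod _ f2 3 (by norm_num),
    hgf_prod _ f1 4 (by norm_num), hgf_prod _ f0 4 (by norm_num)]

set_option maxHeartbeats 4000000 in
open PowerSeries in
theorem hgf_w0_num : hgf hw0 * ((1 - X ^ 2) * (1 - X ^ 3) ^ 2 * (1 - X ^ 4) * (1 - X ^ 5) ^ 2 * (1 - X ^ 6) ^ 2) =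
    ((1 - X ^ 2) * (1 - X ^ 3) * (1 - X ^ 4) * (1 - X ^ 5) * (1 - X ^ 6))
    + X ^ 6 * ((1 - X ^ 2) * (1 - X ^ 3) ^ 2 * (1 - X ^ 4) * (1 - X ^ 5))
    + X ^ 2 * ((1 - X ^ 3) * (1 - X ^ 4) * (1 - X ^ 5) ^ 2 * (1 - X ^ 6))
    + X ^ 8 * ((1 - X ^ 3) ^ 2 * (1 - X ^ 4) * (1 - X ^ 5) ^ 2)
    + X ^ 4 * ((1 - X ^ 2) * (1 - X ^ 3) * (1 - X ^ 5) * (1 - X ^ 6) ^ 2)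
    + X ^ 3 * ((1 - X ^ 2) * (1 - X ^ 5) ^ 2 * (1 - X ^ 6) ^ 2)
    + X ^ 5 * ((1 - X ^ 4) * (1 - X ^ 5) ^ 2 * (1 - X ^ 6) ^ 2)
    + X ^ 5 * ((1 - X ^ 2) * (1 - X ^ 3) ^ 2 * (1 - X ^ 4) * (1 - X ^ 6))
    + X ^ 9 * ((1 - X ^ 2) * (1 - X ^ 3) ^ 2 * (1 - X ^ 6) ^ 2)
    + X ^ 8 * ((1 - X ^ 2) * (1 - X ^ 3) * (1 - X ^ 5) * (1 - X ^ 6) ^ 2)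
    + X ^ 6 * ((1 - X ^ 3) ^ 2 * (1 - X ^ 4) * (1 - X ^ 5) ^ 2)
    + X ^ 11 * ((1 - X ^ 2) * (1 - X ^ 3) ^ 2 * (1 - X ^ 4) * (1 - X ^ 5))
    + X ^ 9 * ((1 - X ^ 3) * (1 - X ^ 4) * (1 - X ^ 5) ^ 2 * (1 - X ^ 6))
    + X ^ 14 * ((1 - X ^ 2) * (1 - X ^ 3) * (1 - X ^ 4) * (1 - X ^ 5) * (1 - X ^ 6)) := by
  rw [hgf_w0]
  have l0 : hgf (hleaf 0) * ((1 - X ^ 3) * (1 - X ^ 5) * (1 - X ^ 6)) = X ^ 0 := hgf_leaf 0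
  have l1 : hgf (hleaf 1) * ((1 - X ^ 6) * (1 - X ^ 5) * (1 - X ^ 6)) = X ^ 6 := hgf_leaf 1
  have l2 : hgf (hleaf 2) * ((1 - X ^ 3) * (1 - X ^ 2) * (1 - X ^ 6)) = X ^ 2 := hgf_leaf 2
  have l3 : hgf (hleaf 3) * ((1 - X ^ 6) * (1 - X ^ 2) * (1 - X ^ 6)) = X ^ 8 := hgf_leaf 3
  have l4 : hgf (hleaf 4) * ((1 - X ^ 3) * (1 - X ^ 5) * (1 - X ^ 4)) = X ^ 4 := hgf_leaf 4
  have l5 : hgf (hleaf 5) * ((1 - X ^ 3) * (1 - X ^ 4) * (1 - X ^ 3)) = X ^ 3 := hgf_leaf 5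
  have l6 : hgf (hleaf 6) * ((1 - X ^ 3) * (1 - X ^ 2) * (1 - X ^ 3)) = X ^ 5 := hgf_leaf 6
  have l7 : hgf (hleaf 7) * ((1 - X ^ 5) * (1 - X ^ 5) * (1 - X ^ 6)) = X ^ 5 := hgf_leaf 7
  have l8 : hgf (hleaf 8) * ((1 - X ^ 5) * (1 - X ^ 5) * (1 - X ^ 4)) = X ^ 9 := hgf_leaf 8
  have l9 : hgf (hleaf 9) * ((1 - X ^ 5) * (1 - X ^ 4) * (1 - X ^ 3)) = X ^ 8 := hgf_leaf 9
  have l10 : hgf (hleaf 10) * ((1 - X ^ 6) * (1 - X ^ 2) * (1 - X ^ 6)) = X ^ 6 := hgf_leaf 10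
  have l11 : hgf (hleaf 11) * ((1 - X ^ 5) * (1 - X ^ 6) * (1 - X ^ 6)) = X ^ 11 := hgf_leaf 11
  have l12 : hgf (hleaf 12) * ((1 - X ^ 6) * (1 - X ^ 2) * (1 - X ^ 3)) = X ^ 9 := hgf_leaf 12
  have l13 : hgf (hleaf 13) * ((1 - X ^ 5) * (1 - X ^ 6) * (1 - X ^ 3)) = X ^ 14 := hgf_leaf 13
  have hs : ∑ k, hgf (hleaf k) = hgf (hleaf 0) + hgf (hleaf 1) + hgf (hleaf 2) + hgf (hleaf 3) + hgf (hleaf 4) + hgf (hleaf 5) + hgf (hleaf 6) + hgf (hleaf 7) + hgf (hleaf 8) + hgf (hleaf 9) + hgf (hleaf 10) + hgf (hleaf 11) + hgf (hleaf 12) + hgf (hleaf 13) := by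
    simp only [Fin.sum_univ_succ, Fin.sum_univ_zero]
    simp only [add_assoc, add_zero]
    rfl
  rw [hs]
  generalize hgf (hleaf 0) = g0 at *
  generalize hgf (hleaf 1) = g1 at *
  generalize hgf (hleaf 2) = g2 at *
  generalize hgf (hleaf 3) = g3 at *
  generalize hgf (hleaf 4) = g4 at *
  generalize hgf (hleaf 5) = g5 at *
  generalize hgf (hleaf 6) = g6 at *
  generalize hgf (hleaf 7) = g7 at *
  generalize hgf (hleaf 8) = g8 at *
  generalize hgf (hleaf 9) = g9 at *
  generalize hgf (hleaf 10) = g10 at *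
  generalize hgf (hleaf 11) = g11 at *
  generalize hgf (hleaf 12) = g12 at *
  generalize hgf (hleaf 13) = g13 at *
  generalize (1 - X ^ 2 : PowerSeries ℤ) = A2 at *
  generalize (1 - X ^ 3 : PowerSeries ℤ) = A3 at *
  generalize (1 - X ^ 4 : PowerSeries ℤ) = A4 at *
  generalize (1 - X ^ 5 : PowerSeries ℤ) = A5 at *
  generalize (1 - X ^ 6 : PowerSeries ℤ) = A6 at *
  linear_combination (A2 * A3 * A4 * A5 * A6) * l0
    + (A2 * A3 ^ 2 * A4 * A5) * l1
    + (A3 * A4 * A5 ^ 2 * A6) * l2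
    + (A3 ^ 2 * A4 * A5 ^ 2) * l3
    + (A2 * A3 * A5 * A6 ^ 2) * l4
    + (A2 * A5 ^ 2 * A6 ^ 2) * l5
    + (A4 * A5 ^ 2 * A6 ^ 2) * l6
    + (A2 * A3 ^ 2 * A4 * A6) * l7
    + (A2 * A3 ^ 2 * A6 ^ 2) * l8
    + (A2 * A3 * A5 * A6 ^ 2) * l9
    + (A3 ^ 2 * A4 * A5 ^ 2) * l10
    + (A2 * A3 ^ 2 * A4 * A5) * l11
    + (A3 * A4 * A5 ^ 2 * A6) * l12
    + (A2 * A3 * A4 * A5 * A6) * l13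

set_option maxHeartbeats 4000000 in
theorem hpoly_identity {R : Type*} [CommRing R] (X : R) :
    (((1 - X ^ 2) * (1 - X ^ 3) * (1 - X ^ 4) * (1 - X ^ 5) * (1 - X ^ 6)) + X ^ 6 * ((1 - X ^ 2) * (1 - X ^ 3) ^ 2 * (1 - X ^ 4) * (1 - X ^ 5)) + X ^ 2 * ((1 - X ^ 3) * (1 - X ^ 4) * (1 - X ^ 5) ^ 2 * (1 - X ^ 6)) + X ^ 8 * ((1 - X ^ 3) ^ 2 * (1 - X ^ 4) * (1 - X ^ 5) ^ 2) + X ^ 4 * ((1 - X ^ 2) * (1 - X ^ 3) * (1 - X ^ 5) * (1 - X ^ 6) ^ 2) + X ^ 3 * ((1 - X ^ 2) * (1 - X ^ 5) ^ 2 * (1 - X ^ 6) ^ 2) + X ^ 5 * ((1 - X ^ 4) * (1 - X ^ 5) ^ 2 * (1 - X ^ 6) ^ 2) + X ^ 5 * ((1 - X ^ 2) * (1 - X ^ 3) ^ 2 * (1 - X ^ 4) * (1 - X ^ 6)) + X ^ 9 * ((1 - X ^ 2) * (1 - X ^ 3) ^ 2 * (1 - X ^ 6) ^ 2) + X ^ 8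 * ((1 - X ^ 2) * (1 - X ^ 3) * (1 - X ^ 5) * (1 - X ^ 6) ^ 2) + X ^ 6 * ((1 - X ^ 3) ^ 2 * (1 - X ^ 4) * (1 - X ^ 5) ^ 2) + X ^ 11 * ((1 - X ^ 2) * (1 - X ^ 3) ^ 2 * (1 - X ^ 4) * (1 - X ^ 5)) + X ^ 9 * ((1 - X ^ 3) * (1 - X ^ 4) * (1 - X ^ 5) ^ 2 * (1 - X ^ 6)) + X ^ 14 * ((1 - X ^ 2) * (1 - X ^ 3) * (1 - X ^ 4) * (1 - X ^ 5) * (1 - X ^ 6))) * ((1 - X) ^ 4 * (1 - X ^ 2) ^ 6 * (1 - X ^ 12) ^ 4) =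
    (1 - 2 * X - 2 * X ^ 2 + 10 * X ^ 3 - 2 * X ^ 4 - 24 * X ^ 5 + 22 * X ^ 6
        + 32 * X ^ 7 - 54 * X ^ 8 - 18 * X ^ 9 + 80 * X ^ 10 - 14 * X ^ 11
        - 72 * X ^ 12 + 34 * X ^ 13 + 44 * X ^ 14 - 18 * X ^ 15 - 25 * X ^ 16
        - 18 * X ^ 17 + 44 * X ^ 18 + 34 * X ^ 19 - 72 * X ^ 20 - 14 * X ^ 21
        + 80 * X ^ 22 - 18 * X ^ 23 - 54 * X ^ 24 + 32 * X ^ 25 + 22 * X ^ 26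
        - 24 * X ^ 27 - 2 * X ^ 28 + 10 * X ^ 29 - 2 * X ^ 30 - 2 * X ^ 31
        + X ^ 32 ) * (((1 - X ^ 2) * (1 - X ^ 3) ^ 2 * (1 - X ^ 4) * (1 - X ^ 5) ^ 2 * (1 - X ^ 6) ^ 2) *
      ((1 - X ^ 4) * (1 - X ^ 4) * (1 - X ^ 2) * (1 - X ^ 3) * (1 - X ^ 2) *
    (1 - X ^ 1) * (1 - X ^ 4) * (1 - X ^ 1) * (1 - X ^ 3) * (1 - X ^ 4) * (1 - X ^ 4))) := by
  ring

set_option maxHeartbeats 4000000 in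
theorem hinit_identity {R : Type*} [CommRing R] (X : R) :
    (1 + 2 * X + 6 * X ^ 2 + 14 * X ^ 3 + 34 * X ^ 4 + 68 * X ^ 5 + 142 * X ^ 6 + 268 * X ^ 7
      + 508 * X ^ 8 + 902 * X ^ 9) * ((1 - X) ^ 4 * (1 - X ^ 2) ^ 6 * (1 - X ^ 12) ^ 4) =
    (1 - 2 * X - 2 * X ^ 2 + 10 * X ^ 3 - 2 * X ^ 4 - 24 * X ^ 5 + 22 * X ^ 6
        + 32 * X ^ 7 - 54 * X ^ 8 - 18 * X ^ 9 + 80 * X ^ 10 - 14 * X ^ 11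
        - 72 * X ^ 12 + 34 * X ^ 13 + 44 * X ^ 14 - 18 * X ^ 15 - 25 * X ^ 16
        - 18 * X ^ 17 + 44 * X ^ 18 + 34 * X ^ 19 - 72 * X ^ 20 - 14 * X ^ 21
        + 80 * X ^ 22 - 18 * X ^ 23 - 54 * X ^ 24 + 32 * X ^ 25 + 22 * X ^ 26
        - 24 * X ^ 27 - 2 * X ^ 28 + 10 * X ^ 29 - 2 * X ^ 30 - 2 * X ^ 31
        + X ^ 32 ) + X ^ 10 * ((-1596) * X ^ 0 + (3686) * X ^ 1 + (6260) * X ^ 2 + (-21142) * X ^ 3 + (-4464) * X ^ 4 +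
      (49550) * X ^ 5 + (-16054) * X ^ 6 + (-59568) * X ^ 7 + (39242) * X ^ 8 + (36636) * X ^ 9
      + (-37222) * X ^ 10 + (-8294) * X ^ 11 + (23094) * X ^ 12 + (-16434) * X ^ 13 + (-27808) *
      X ^ 14 + (85322) * X ^ 15 + (17678) * X ^ 16 + (-198204) * X ^ 17 + (64338) * X ^ 18 +
      (238574) * X ^ 19 + (-157362) * X ^ 20 + (-146998) * X ^ 21 + (149715) * X ^ 22 + (33412)
      * X ^ 23 + (-77536) * X ^ 24 + (29088) * X ^ 25 + (49548) * X ^ 26 + (-130296) * X ^ 27 +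
      (-26560) * X ^ 28 + (297392) * X ^ 29 + (-96514) * X ^ 30 + (-357996) * X ^ 31 + (236156)
      * X ^ 32 + (220660) * X ^ 33 + (-224844) * X ^ 34 + (-50208) * X ^ 35 + (108724) * X ^ 36
      + (-25272) * X ^ 37 + (-43367) * X ^ 38 + (89874) * X ^ 39 + (17710) * X ^ 40 + (-198278)
      * X ^ 41 + (64346) * X ^ 42 + (238704) * X ^ 43 + (-157474) * X ^ 44 + (-147160) * X ^ 45
      + (149986) * X ^ 46 + (33502) * X ^ 47 + (-69956) * X ^ 48 + (10728) * X ^ 49 + (18592) *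
      X ^ 50 + (-24724) * X ^ 51 + (-4428) * X ^ 52 + (49572) * X ^ 53 + (-16087) * X ^ 54 +
      (-59682) * X ^ 55 + (39374) * X ^ 56 + (36798) * X ^ 57 + (-37510) * X ^ 58 + (-8380) * X
      ^ 59 + (17110) * X ^ 60 + (-1764) * X ^ 61 + (-3100) * X ^ 62 + (902) * X ^ 63) := by
  ring

theorem hcancel {R : Type*} [CommRing R] [IsDomain R] (g P Q D F : R)
    (h : g * P * Q * D = F * (Q * P)) (hne : Q * P ≠ 0) : g * D = F := by
  refine mul_right_cancel₀ hne ?_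
  rw [← h]
  ring

set_option maxHeartbeats 4000000 in
open PowerSeries in
/-- The generating function of the numbers of hives for `GL(4)` with `h₅₅ = d`
satisfies `(Σ m_d t^d) (1-t)⁴ (1-t²)⁶ (1-t¹²)⁴ = f(t)` for the explicit palindromic
polynomial `f` of degree 32; in particular
`m₀, ..., m₉ = 1, 2, 6, 14, 34, 68, 142, 268, 508, 902`. -/
theorem hiveCount4_generating_function :
    (PowerSeries.mk fun d => (hiveCount4 d : ℤ)) *
      ((1 - X) ^ 4 * (1 - X ^ 2) ^ 6 * (1 - X ^ 12) ^ 4) =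
      1 - 2 * X - 2 * X ^ 2 + 10 * X ^ 3 - 2 * X ^ 4 - 24 * X ^ 5 + 22 * X ^ 6
        + 32 * X ^ 7 - 54 * X ^ 8 - 18 * X ^ 9 + 80 * X ^ 10 - 14 * X ^ 11
        - 72 * X ^ 12 + 34 * X ^ 13 + 44 * X ^ 14 - 18 * X ^ 15 - 25 * X ^ 16
        - 18 * X ^ 17 + 44 * X ^ 18 + 34 * X ^ 19 - 72 * X ^ 20 - 14 * X ^ 21
        + 80 * X ^ 22 - 18 * X ^ 23 - 54 * X ^ 24 + 32 * X ^ 25 + 22 * X ^ 26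
        - 24 * X ^ 27 - 2 * X ^ 28 + 10 * X ^ 29 - 2 * X ^ 30 - 2 * X ^ 31
        + X ^ 32 ∧
    hiveCount4 0 = 1 ∧ hiveCount4 1 = 2 ∧ hiveCount4 2 = 6 ∧ hiveCount4 3 = 14 ∧
    hiveCount4 4 = 34 ∧ hiveCount4 5 = 68 ∧ hiveCount4 6 = 142 ∧ hiveCount4 7 = 268 ∧
    hiveCount4 8 = 508 ∧ hiveCount4 9 = 902 := by
  have hQ : ∀ n : ℕ, 0 < n → (1 - X ^ n : PowerSeries ℤ) ≠ 0 := by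
    intro n hn h
    have := congrArg (PowerSeries.constantCoeff) h
    simp [hn.ne'] at this
  have main : (PowerSeries.mk fun d => (hiveCount4 d : ℤ)) *
      ((1 - X) ^ 4 * (1 - X ^ 2) ^ 6 * (1 - X ^ 12) ^ 4) = 1 - 2 * X - 2 * X ^ 2 + 10 * X ^ 3 - 2 * X ^ 4 - 24 * X ^ 5 + 22 * X ^ 6
        + 32 * X ^ 7 - 54 * X ^ 8 - 18 * X ^ 9 + 80 * X ^ 10 - 14 * X ^ 11
        - 72 * X ^ 12 + 34 * X ^ 13 + 44 * X ^ 14 - 18 * X ^ 15 - 25 * X ^ 16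
        - 18 * X ^ 17 + 44 * X ^ 18 + 34 * X ^ 19 - 72 * X ^ 20 - 14 * X ^ 21
        + 80 * X ^ 22 - 18 * X ^ 23 - 54 * X ^ 24 + 32 * X ^ 25 + 22 * X ^ 26
        - 24 * X ^ 27 - 2 * X ^ 28 + 10 * X ^ 29 - 2 * X ^ 30 - 2 * X ^ 31
        + X ^ 32 := by
    rw [hive_gf_eq]
    have h1 := hgf_W
    have h2 := hgf_w0_num
    have h3 := hpoly_identity (X : PowerSeries ℤ)
    rw [← h2, ← h1] at h3
    have hne : ((1 - X ^ 2) * (1 - X ^ 3) ^ 2 * (1 - X ^ 4) * (1 - X ^ 5) ^ 2 * (1 - X ^ 6) ^ 2) *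
      ((1 - X ^ 4) * (1 - X ^ 4) * (1 - X ^ 2) * (1 - X ^ 3) * (1 - X ^ 2) *
        (1 - X ^ 1) * (1 - X ^ 4) * (1 - X ^ 1) * (1 - X ^ 3) * (1 - X ^ 4) * (1 - X ^ 4))
        ≠ (0 : PowerSeries ℤ) := by
      simp only [ne_eq, mul_eq_zero, pow_eq_zero_iff', not_or, not_and_or]
      have h11 : (1 - X : PowerSeries ℤ) ≠ 0 := by simpa using hQ 1 (by norm_num)
      simp [hQ, h11]
    exact hcancel _ _ _ _ _ h3 hne
  refine ⟨main, ?_⟩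
  have hd : (X : PowerSeries ℤ) ^ 10 ∣ (PowerSeries.mk fun d => (hiveCount4 d : ℤ)) -
      (1 + 2 * X + 6 * X ^ 2 + 14 * X ^ 3 + 34 * X ^ 4 + 68 * X ^ 5 + 142 * X ^ 6 + 268 * X ^ 7
      + 508 * X ^ 8 + 902 * X ^ 9) := by
    have hu : IsUnit ((1 - X) ^ 4 * (1 - X ^ 2) ^ 6 * (1 - X ^ 12) ^ 4 : PowerSeries ℤ) := by
      rw [PowerSeries.isUnit_iff_constantCoeff]
      simp
    rw [← hu.dvd_mul_right, sub_mul, main, hinit_identity (X : PowerSeries ℤ), sub_add_cancel_left]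
    exact (dvd_mul_right _ _).neg_right
  rw [PowerSeries.X_pow_dvd_iff] at hd
  have hk : ∀ m < 10, (hiveCount4 m : ℤ) = PowerSeries.coeff m
      (1 + 2 * X + 6 * X ^ 2 + 14 * X ^ 3 + 34 * X ^ 4 + 68 * X ^ 5 + 142 * X ^ 6 + 268 * X ^ 7
      + 508 * X ^ 8 + 902 * X ^ 9 : PowerSeries ℤ) := by
    intro m hm
    have := hd m hm
    rw [map_sub, PowerSeries.coeff_mk] at this
    exact sub_eq_zero.mp this
  have hpoly : (1 + 2 * X + 6 * X ^ 2 + 14 * X ^ 3 + 34 * X ^ 4 + 68 * X ^ 5 + 142 * X ^ 6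
      + 268 * X ^ 7 + 508 * X ^ 8 + 902 * X ^ 9 : PowerSeries ℤ) =
      C 1 * X ^ 0 + C 2 * X ^ 1 + C 6 * X ^ 2 + C 14 * X ^ 3 + C 34 * X ^ 4 + C 68 * X ^ 5
      + C 142 * X ^ 6 + C 268 * X ^ 7 + C 508 * X ^ 8 + C 902 * X ^ 9 := by
    simp
  rw [hpoly] at hk
  simp only [map_add, PowerSeries.coeff_C_mul, PowerSeries.coeff_X_pow] at hk
  refine ⟨?_, ?_, ?_, ?_, ?_, ?_, ?_, ?_, ?_, ?_⟩
  · exact_mod_cast hk 0 (by norm_num)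
  · exact_mod_cast hk 1 (by norm_num)
  · exact_mod_cast hk 2 (by norm_num)
  · exact_mod_cast hk 3 (by norm_num)
  · exact_mod_cast hk 4 (by norm_num)
  · exact_mod_cast hk 5 (by norm_num)
  · exact_mod_cast hk 6 (by norm_num)
  · exact_mod_cast hk 7 (by norm_num)
  · exact_mod_cast hk 8 (by norm_num)
  · exact_mod_cast hk 9 (by norm_num)
end

section
/- The GL(2) tensor product algebra TA(2) = C[M_2 ⊕ M_2]^{U_2 × U_2 × U_2} is generated as a C-algebra by the five polynomials g_1 = det [[y_{11}, y_{12}], [y_{21}, y_{22}]], g_2 = det [[x_{11}, y_{11}], [x_{21}, y_{21}]], g_3 = x_{11}, g_4 = det [[x_{11}, x_{12}], [x_{21}, x_{22}]], g_5 = y_{11}. -/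
open MvPolynomial

/-- The polynomial ring `ℂ[M_n ⊕ M_n]` in the variables `x_{ab}` (indexed by
`Sum.inl (a, b)`) and `y_{ab}` (indexed by `Sum.inr (a, b)`), `1 ≤ a, b ≤ n`. -/
abbrev MV (n : ℕ) := MvPolynomial ((Fin n × Fin n) ⊕ (Fin n × Fin n)) ℂ

/-- `g` is upper triangular with all diagonal entries equal to `1`. -/
def IsUniUpper {n : ℕ} (g : Matrix (Fin n) (Fin n) ℂ) : Prop :=
  (∀ i, g i i = 1) ∧ ∀ i j : Fin n, j < i → g i j = 0

/-- The action of `(g₁, g₂, g₃) ∈ GL(n)³` on `ℂ[M_n ⊕ M_n]`, given by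
`(g·f)(m₁, m₂) = f(g₁ᵀ m₁ g₂, g₁ᵀ m₂ g₃)`: it substitutes for `x_{ab}` the
`(a,b)` entry of `g₁ᵀ X g₂` and for `y_{ab}` the `(a,b)` entry of `g₁ᵀ Y g₃`. -/
noncomputable def act (n : ℕ) (g1 g2 g3 : Matrix (Fin n) (Fin n) ℂ) : MV n →ₐ[ℂ] MV n :=
  aeval (Sum.elim
    (fun p : Fin n × Fin n => ∑ c : Fin n, ∑ d : Fin n,
      C (g1 c p.1) * C (g2 d p.2) * X (Sum.inl (c, d)))
    (fun p : Fin n × Fin n => ∑ c : Fin n, ∑ d : Fin n,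
      C (g1 c p.1) * C (g3 d p.2) * X (Sum.inr (c, d))))

/-- The tensor product algebra `TA(n)`: the subalgebra of `ℂ[M_n ⊕ M_n]` of
polynomials invariant under `U_n × U_n × U_n`. -/
noncomputable def TA (n : ℕ) : Subalgebra ℂ (MV n) where
  carrier := {f | ∀ g1 g2 g3 : Matrix (Fin n) (Fin n) ℂ,
      IsUniUpper g1 → IsUniUpper g2 → IsUniUpper g3 → act n g1 g2 g3 f = f}
  mul_mem' := by
    intro a b ha hb g1 g2 g3 u1 u2 u3
    rw [map_mul, ha g1 g2 g3 u1 u2 u3, hb g1 g2 g3 u1 u2 u3]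
  one_mem' := by
    intro g1 g2 g3 u1 u2 u3
    rw [map_one]
  add_mem' := by
    intro a b ha hb g1 g2 g3 u1 u2 u3
    rw [map_add, ha g1 g2 g3 u1 u2 u3, hb g1 g2 g3 u1 u2 u3]
  zero_mem' := by
    intro g1 g2 g3 u1 u2 u3
    rw [map_zero]
  algebraMap_mem' := by
    intro r g1 g2 g3 u1 u2 u3
    exact (act n g1 g2 g3).commutes r

/-- The coordinate `x_{ab}` on the first matrix summand (`a b` zero-based). -/
noncomputable def xv (a b : Fin 2) : MV 2 := X (Sum.inl (a, b))

/-- The coordinate `y_{ab}` on the second matrix summand (`a b` zero-based). -/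
noncomputable def yv (a b : Fin 2) : MV 2 := X (Sum.inr (a, b))

/-- `g₁ = det [[y₁₁, y₁₂], [y₂₁, y₂₂]]`. -/
noncomputable def g1 : MV 2 := yv 0 0 * yv 1 1 - yv 0 1 * yv 1 0

/-- `g₂ = det [[x₁₁, y₁₁], [x₂₁, y₂₁]]`. -/
noncomputable def g2 : MV 2 := xv 0 0 * yv 1 0 - yv 0 0 * xv 1 0

/-- `g₃ = x₁₁`. -/
noncomputable def g3 : MV 2 := xv 0 0

/-- `g₄ = det [[x₁₁, x₁₂], [x₂₁, x₂₂]]`. -/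
noncomputable def g4 : MV 2 := xv 0 0 * xv 1 1 - xv 0 1 * xv 1 0

/-- `g₅ = y₁₁`. -/
noncomputable def g5 : MV 2 := yv 0 0

/-- The generators as a family. -/
noncomputable def gens : Fin 5 → MV 2 := ![g1, g2, g3, g4, g5]

/-- The unipotent upper triangular matrix with off-diagonal entry `t`. -/
def uu (t : ℂ) : Matrix (Fin 2) (Fin 2) ℂ := !![1, t; 0, 1]

theorem uu_uni (t : ℂ) : IsUniUpper (uu t) := by
  refine ⟨?_, ?_⟩
  · intro i
    fin_cases i <;> simp [uu]
  · intro i j h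
    fin_cases i <;> fin_cases j <;> simp_all [uu]

theorem uni_eq (g : Matrix (Fin 2) (Fin 2) ℂ) (h : IsUniUpper g) : g = uu (g 0 1) := by
  ext i j
  fin_cases i <;> fin_cases j
  · simpa [uu] using h.1 0
  · simp [uu]
  · simpa [uu] using h.2 1 0 (by decide)
  · simpa [uu] using h.1 1

theorem gens_mem (i : Fin 5) : gens i ∈ TA 2 := by
  intro a b c ha hb hc
  rw [uni_eq a ha, uni_eq b hb, uni_eq c hc]
  fin_cases i <;>
    simp [gens, g1, g2, g3, g4, g5, xv, yv, act, uu, Fin.sum_univ_two] <;> ring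

theorem adjoin_eq : Algebra.adjoin ℂ ({g1, g2, g3, g4, g5} : Set (MV 2))
    = (aeval gens : MvPolynomial (Fin 5) ℂ →ₐ[ℂ] MV 2).range := by
  rw [← Algebra.adjoin_range_eq_range_aeval]
  congr 1
  ext z
  simp [gens]
  tauto

/-- Evaluation of an element of the adjoined algebra. -/
theorem eval_aeval_gens (v : (Fin 2 × Fin 2) ⊕ (Fin 2 × Fin 2) → ℂ)
    (P : MvPolynomial (Fin 5) ℂ) :
    eval v (aeval gens P) = eval (fun i => eval v (gens i)) P := by
  induction P using MvPolynomial.induction_on with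
  | C a => simp
  | add p q hp hq => simp only [map_add, hp, hq]
  | mul_X p i hp => simp only [map_mul, hp, aeval_X, eval_X]

/-- Setting the variable `i` to zero. -/
noncomputable def kill (i : Fin 5) : MvPolynomial (Fin 5) ℂ →ₐ[ℂ] MvPolynomial (Fin 5) ℂ :=
  aeval (fun j => if j = i then 0 else X j)

theorem dvd_sub_kill (i : Fin 5) (P : MvPolynomial (Fin 5) ℂ) : X i ∣ P - kill i P := by
  induction P using MvPolynomial.induction_on with
  | C a => simp [kill]
  | add p q hp hq =>
    rw [map_add, add_sub_add_comm]
    exact dvd_add hp hq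
  | mul_X p j hp =>
    have : p * X j - kill i (p * X j)
        = (p - kill i p) * X j + kill i p * (X j - kill i (X j)) := by
      rw [map_mul]; ring
    rw [this]
    refine dvd_add (hp.mul_right _) (Dvd.dvd.mul_left ?_ _)
    by_cases h : j = i
    · simp [kill, h]
    · simp [kill, h]

theorem eval_kill (i : Fin 5) (P : MvPolynomial (Fin 5) ℂ) (t : Fin 5 → ℂ) :
    eval t (kill i P) = eval (Function.update t i 0) P := by
  induction P using MvPolynomial.induction_on with
  | C a => simp [kill]
  | add p q hp hq => simp [hp, hq]
  | mul_X p j hp =>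
    rw [map_mul, map_mul, hp, map_mul]
    congr 1
    by_cases h : j = i
    · subst h; simp [kill]
    · simp [kill, h]

theorem dvd_of_vanish (i j k : Fin 5) (hj : j ≠ i) (hk : k ≠ i) (P : MvPolynomial (Fin 5) ℂ)
    (h : ∀ t : Fin 5 → ℂ, t i = 0 → t j ≠ 0 → t k ≠ 0 → eval t P = 0) : X i ∣ P := by
  have h0 : kill i P * (X j * X k) = 0 := by
    apply MvPolynomial.funext
    intro t
    rw [map_mul, map_mul, eval_X, eval_X, map_zero, eval_kill]
    by_cases h1 : t j = 0
    · simp [h1]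
    by_cases h2 : t k = 0
    · simp [h2]
    rw [h (Function.update t i 0) (by simp) (by simpa [hj] using h1) (by simpa [hk] using h2),
      zero_mul]
  have h1 : kill i P = 0 := by
    rcases mul_eq_zero.1 h0 with h | h
    · exact h
    · exact absurd h (mul_ne_zero (X_ne_zero _) (X_ne_zero _))
  simpa [h1] using dvd_sub_kill i P

/-- The point with the given coordinates. -/
def pt (a b c d e f g h : ℂ) : (Fin 2 × Fin 2) ⊕ (Fin 2 × Fin 2) → ℂ :=
  Sum.elim (fun p => !![a, b; c, d] p.1 p.2) (fun p => !![e, f; g, h] p.1 p.2)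

theorem eval_gens_pt (a b c d e f g h : ℂ) :
    (fun i => eval (pt a b c d e f g h) (gens i))
      = ![e * h - f * g, a * g - e * c, a, a * d - b * c, e] := by
  funext i
  fin_cases i <;> simp [gens, g1, g2, g3, g4, g5, xv, yv, pt]

theorem pt_eta (v : (Fin 2 × Fin 2) ⊕ (Fin 2 × Fin 2) → ℂ) :
    ∃ a b c d e f g h, v = pt a b c d e f g h := by
  refine ⟨v (Sum.inl (0, 0)), v (Sum.inl (0, 1)), v (Sum.inl (1, 0)), v (Sum.inl (1, 1)),
    v (Sum.inr (0, 0)), v (Sum.inr (0, 1)), v (Sum.inr (1, 0)), v (Sum.inr (1, 1)), ?_⟩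
  funext p
  rcases p with ⟨i, j⟩ | ⟨i, j⟩ <;> fin_cases i <;> fin_cases j <;> simp [pt]

theorem fin5_eta (t : Fin 5 → ℂ) : t = ![t 0, t 1, t 2, t 3, t 4] := by
  funext i
  fin_cases i <;> rfl

theorem div_x (f : MV 2) (h : g3 * f ∈ (aeval gens : MvPolynomial (Fin 5) ℂ →ₐ[ℂ] MV 2).range) :
    f ∈ (aeval gens : MvPolynomial (Fin 5) ℂ →ₐ[ℂ] MV 2).range := by
  obtain ⟨P, hP⟩ := h
  replace hP : aeval gens P = g3 * f := hP
  have hd : X 2 ∣ P := by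
    refine dvd_of_vanish 2 1 4 (by decide) (by decide) P ?_
    intro t h2 h1 h4
    have key := eval_aeval_gens
      (pt 0 (t 3 * t 4 / t 1) (-t 1 / t 4) 0 (t 4) 0 0 (t 0 / t 4)) P
    rw [eval_gens_pt, hP] at key
    have e : ![t 4 * (t 0 / t 4) - 0 * 0, 0 * 0 - t 4 * (-t 1 / t 4), 0,
        0 * 0 - (t 3 * t 4 / t 1) * (-t 1 / t 4), t 4] = t := by
      conv_rhs => rw [fin5_eta t]
      rw [h2]
      congr 1
      · field_simp; ring
      congr 1
      · field_simp; ring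
      congr 2
      field_simp; ring
    rw [e] at key
    rw [← key]
    simp [g3, xv, pt]
  obtain ⟨Q, rfl⟩ := hd
  refine ⟨Q, ?_⟩
  have : g3 * aeval gens Q = g3 * f := by
    rw [← hP, map_mul, aeval_X]; rfl
  exact mul_left_cancel₀ (X_ne_zero _) this

theorem div_y (f : MV 2) (h : g5 * f ∈ (aeval gens : MvPolynomial (Fin 5) ℂ →ₐ[ℂ] MV 2).range) :
    f ∈ (aeval gens : MvPolynomial (Fin 5) ℂ →ₐ[ℂ] MV 2).range := by
  obtain ⟨P, hP⟩ := h
  replace hP : aeval gens P = g5 * f := hP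
  have hd : X 4 ∣ P := by
    refine dvd_of_vanish 4 1 2 (by decide) (by decide) P ?_
    intro t h4 h1 h2
    have key := eval_aeval_gens
      (pt (t 2) 0 0 (t 3 / t 2) 0 (-t 0 * t 2 / t 1) (t 1 / t 2) 0) P
    rw [eval_gens_pt, hP] at key
    have e : ![0 * 0 - (-t 0 * t 2 / t 1) * (t 1 / t 2), t 2 * (t 1 / t 2) - 0 * 0, t 2,
        t 2 * (t 3 / t 2) - 0 * 0, 0] = t := by
      conv_rhs => rw [fin5_eta t]
      rw [h4]
      congr 1
      · field_simp; ring
      congr 1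
      · field_simp; ring
      congr 2
      field_simp; ring
    rw [e] at key
    rw [← key]
    simp [g5, yv, pt]
  obtain ⟨Q, rfl⟩ := hd
  refine ⟨Q, ?_⟩
  have : g5 * aeval gens Q = g5 * f := by
    rw [← hP, map_mul, aeval_X]; rfl
  exact mul_left_cancel₀ (X_ne_zero _) this

/-- The normal form with invariants `t`. -/
noncomputable def nf (t : Fin 5 → ℂ) : (Fin 2 × Fin 2) ⊕ (Fin 2 × Fin 2) → ℂ :=
  pt (t 2) 0 0 (t 3 / t 2) (t 4) 0 (t 1 / t 2) (t 0 / t 4)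

theorem nf_clear (f : MV 2) : ∃ (N : ℕ) (P : MvPolynomial (Fin 5) ℂ), ∀ t : Fin 5 → ℂ,
    t 2 ≠ 0 → t 4 ≠ 0 → (t 2 * t 4) ^ N * eval (nf t) f = eval t P := by
  induction f using MvPolynomial.induction_on with
  | C a => exact ⟨0, C a, by simp⟩
  | add p q hp hq =>
    obtain ⟨N, P, hP⟩ := hp
    obtain ⟨M, Q, hQ⟩ := hq
    refine ⟨N + M, (X 2 * X 4) ^ M * P + (X 2 * X 4) ^ N * Q, ?_⟩
    intro t h2 h4
    simp only [map_add, map_mul, map_pow, eval_X, ← hP t h2 h4, ← hQ t h2 h4]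
    ring
  | mul_X p j hp =>
    obtain ⟨N, P, hP⟩ := hp
    have hj : ∃ Q : MvPolynomial (Fin 5) ℂ, ∀ t : Fin 5 → ℂ,
        t 2 ≠ 0 → t 4 ≠ 0 → (t 2 * t 4) * nf t j = eval t Q := by
      rcases j with ⟨a, b⟩ | ⟨a, b⟩ <;> fin_cases a <;> fin_cases b
      · exact ⟨X 2 * X 4 * X 2, fun t h2 h4 => by simp [nf, pt]⟩
      · exact ⟨0, fun t h2 h4 => by simp [nf, pt]⟩
      · exact ⟨0, fun t h2 h4 => by simp [nf, pt]⟩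
      · exact ⟨X 4 * X 3, fun t h2 h4 => by simp [nf, pt]; field_simp⟩
      · exact ⟨X 2 * X 4 * X 4, fun t h2 h4 => by simp [nf, pt]⟩
      · exact ⟨0, fun t h2 h4 => by simp [nf, pt]⟩
      · exact ⟨X 4 * X 1, fun t h2 h4 => by simp [nf, pt]; field_simp⟩
      · exact ⟨X 2 * X 0, fun t h2 h4 => by simp [nf, pt]; field_simp⟩
    obtain ⟨Q, hQ⟩ := hj
    refine ⟨N + 1, P * Q, ?_⟩
    intro t h2 h4
    simp only [map_mul, eval_X, ← hP t h2 h4, ← hQ t h2 h4]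
    ring

/-- Invariance, evaluated at a point. -/
theorem inv_eval (F : MV 2) (hF : F ∈ TA 2) (r s u a b c d e f g h : ℂ) :
    eval (pt a b c d e f g h) F
      = eval (pt a (b + s * a) (c + r * a) (d + r * b + s * (c + r * a))
          e (f + u * e) (g + r * e) (h + r * f + u * (g + r * e))) F := by
  have h1 := hF (uu r) (uu s) (uu u) (uu_uni r) (uu_uni s) (uu_uni u)
  conv_lhs => rw [← h1]
  clear h1 hF
  induction F using MvPolynomial.induction_on with
  | C a => simp
  | add p q hp hq => simp only [map_add, hp, hq]
  | mul_X p j hp =>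
    rw [map_mul, map_mul, hp, map_mul]
    congr 1
    rcases j with ⟨i, j⟩ | ⟨i, j⟩ <;> fin_cases i <;> fin_cases j <;>
      simp [act, uu, pt, Fin.sum_univ_two] <;> ring

theorem inv_nf (F : MV 2) (hF : F ∈ TA 2) (v : (Fin 2 × Fin 2) ⊕ (Fin 2 × Fin 2) → ℂ)
    (hx : eval v g3 ≠ 0) (hy : eval v g5 ≠ 0) :
    eval v F = eval (nf (fun i => eval v (gens i))) F := by
  obtain ⟨a, b, c, d, e, f, g, h, rfl⟩ := pt_eta v
  replace hx : a ≠ 0 := by simpa [g3, xv, pt] using hx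
  replace hy : e ≠ 0 := by simpa [g5, yv, pt] using hy
  rw [eval_gens_pt, inv_eval F hF (-c / a) (-b / a) (-f / e)]
  congr 2
  simp only [nf]
  simp
  congr 1 <;> field_simp <;> ring

/-- The `GL(2)` tensor product algebra `TA(2)` is generated as a `ℂ`-algebra by the
five polynomials `g₁, ..., g₅`. -/
theorem TA2_generators :
    Algebra.adjoin ℂ ({g1, g2, g3, g4, g5} : Set (MV 2)) = TA 2 := by
  rw [adjoin_eq]
  apply le_antisymm
  · rw [← Algebra.adjoin_range_eq_range_aeval]
    apply Algebra.adjoin_le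
    rintro _ ⟨i, rfl⟩
    exact gens_mem i
  · intro F hF
    obtain ⟨N, P, hP⟩ := nf_clear F
    have hx0 : g3 ≠ 0 := X_ne_zero _
    have hy0 : g5 ≠ 0 := X_ne_zero _
    have key : (g3 * g5) * ((g3 * g5) ^ N * F) = (g3 * g5) * aeval gens P := by
      apply MvPolynomial.funext
      intro v
      by_cases hx : eval v g3 = 0
      · simp only [map_mul, hx, zero_mul]
      by_cases hy : eval v g5 = 0
      · simp only [map_mul, hy, zero_mul, mul_zero]
      rw [map_mul, map_mul _ _ (aeval gens P)]
      congr 1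
      rw [eval_aeval_gens, ← hP (fun i => eval v (gens i)) hx hy, ← inv_nf F hF v hx hy]
      simp [gens]
    replace key := mul_left_cancel₀ (mul_ne_zero hx0 hy0) key
    have hmem : (g3 * g5) ^ N * F ∈ (aeval gens : MvPolynomial (Fin 5) ℂ →ₐ[ℂ] MV 2).range :=
      ⟨P, key.symm⟩
    clear key hP
    induction N with
    | zero => simpa using hmem
    | succ n ih =>
      apply ih
      apply div_y
      apply div_x
      convert hmem using 1
      ring
end
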